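/- arXiv:1406.2270 — 2 statements merged into one kernel-verified Lean document; each statement's English description precedes it below -/
import Mathlib

section
/- Let E be an elliptic curve defined over ℚ (given by a Weierstrass equation with coefficients in ℚ and nonzero discriminant). Then the group E(ℚ) of rational points of E, with the elliptic-curve group law, is a finitely generated abelian group. -/
open IsDedekindDomain nonZeroDivisors

section arithmetic

/-- A subgroup has finite relative index in `H` as soon as some finite-valued function on `H`
separates the cosets. -/
theorem Subgroup.relIndex_ne_zero_of_separating {G ι : Type*} [CommGroup G] [Finite ι]
    {H' H : Subgroup G} (f : H → ι) (hf : ∀ a b : H, f a = f b → (a / b : G) ∈ H') :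
    H'.relIndex H ≠ 0 := by
  have : Finite (H ⧸ H'.subgroupOf H) := by
    refine Finite.of_injective (fun q ↦ f q.out) fun p q hpq ↦ ?_
    rw [← QuotientGroup.out_eq' p, ← QuotientGroup.out_eq' q, QuotientGroup.eq_iff_div_mem,
      Subgroup.mem_subgroupOf]
    exact hf _ _ hpq
  exact Subgroup.index_ne_zero_of_finite

variable {R K : Type*} [CommRing R] [IsDedekindDomain R] [Field K] [Algebra R K]
  [IsFractionRing R K]

namespace IsDedekindDomain.HeightOneSpectrum

theorem valuation_eq_exp_neg_count (v : HeightOneSpectrum R) {a : K} (ha : a ≠ 0) :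
    v.valuation K a = WithZero.exp (-FractionalIdeal.count K v (.spanSingleton R⁰ a)) := by
  obtain ⟨n, d, hd, rfl⟩ := IsFractionRing.div_surjective (A := R) a
  have hd0 : d ≠ 0 := nonZeroDivisors.ne_zero hd
  have hn0 : n ≠ 0 := by rintro rfl; simp at ha
  have key : FractionalIdeal.count K v (.spanSingleton R⁰ (algebraMap R K n / algebraMap R K d)) =
      ((Associates.mk v.asIdeal).count (Associates.mk (Ideal.span {n})).factors -
        (Associates.mk v.asIdeal).count (Associates.mk (Ideal.span {d})).factors : ℤ) := by
    refine FractionalIdeal.count_well_defined K v (FractionalIdeal.spanSingleton_ne_zero_iff.mpr ha) ?_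
    rw [FractionalIdeal.coeIdeal_span_singleton, FractionalIdeal.spanSingleton_mul_spanSingleton]
    congr 1
    field_simp
  rw [key, map_div₀, valuation_of_algebraMap, valuation_of_algebraMap, intValuation_if_neg _ hn0,
    intValuation_if_neg _ hd0, ← WithZero.exp_sub]
  congr 1
  ring

theorem toAdd_valuationOfNeZero (v : HeightOneSpectrum R) (a : Kˣ) :
    Multiplicative.toAdd (v.valuationOfNeZero a) =
      -FractionalIdeal.count K v (.spanSingleton R⁰ (a : K)) := by
  have h := v.valuationOfNeZero_eq a
  rw [valuation_eq_exp_neg_count v a.ne_zero] at h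
  exact congrArg Multiplicative.toAdd (WithZero.coe_injective h)

end IsDedekindDomain.HeightOneSpectrum

variable (K) in
/-- The elements of `Kˣ` whose valuation is even at every prime outside `S`. -/
def evenOutside (S : Set (HeightOneSpectrum R)) : Subgroup Kˣ where
  carrier := {a | ∀ v ∉ S, IsSquare (v.valuationOfNeZero a)}
  one_mem' v _ := by simp
  mul_mem' ha hb v hv := by simpa using (ha v hv).mul (hb v hv)
  inv_mem' ha v hv := by simpa using (ha v hv).inv

theorem relIndex_evenOutside_empty_ne_zero {S : Set (HeightOneSpectrum R)} (hS : S.Finite) :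
    (evenOutside K (∅ : Set (HeightOneSpectrum R))).relIndex (evenOutside K S) ≠ 0 := by
  have := hS.to_subtype
  refine Subgroup.relIndex_ne_zero_of_separating (ι := S → ZMod 2)
    (fun a v ↦ ((Multiplicative.toAdd (v.1.valuationOfNeZero (a : Kˣ)) : ℤ) : ZMod 2))
    fun a b hab v _ ↦ ?_
  by_cases hv : v ∈ S
  · have h := congrFun hab ⟨v, hv⟩
    have h2 : Even (Multiplicative.toAdd (v.valuationOfNeZero (a / b : Kˣ))) := by
      rw [← ZMod.intCast_eq_zero_iff_even, map_div, toAdd_div, Int.cast_sub, sub_eq_zero]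
      exact h
    obtain ⟨r, hr⟩ := h2
    exact ⟨Multiplicative.ofAdd r, hr⟩
  · rw [map_div]
    exact (a.2 v hv).div (b.2 v hv)

theorem exists_sq_eq_toPrincipalIdeal {a : Kˣ}
    (ha : a ∈ evenOutside K (∅ : Set (HeightOneSpectrum R))) :
    ∃ I : (FractionalIdeal R⁰ K)ˣ, I ^ 2 = toPrincipalIdeal R K a := by
  have ha' (v : HeightOneSpectrum R) :
      ∃ n, FractionalIdeal.count K v (.spanSingleton R⁰ (a : K)) = n * 2 := by
    obtain ⟨r, hr⟩ := ha v (Set.notMem_empty v)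
    refine ⟨-Multiplicative.toAdd r, ?_⟩
    have := v.toAdd_valuationOfNeZero a
    rw [hr, toAdd_mul] at this
    lia
  choose n hn using ha'
  have hne : FractionalIdeal.spanSingleton R⁰ (a : K) ≠ 0 :=
    FractionalIdeal.spanSingleton_ne_zero_iff.mpr a.ne_zero
  have hprod := FractionalIdeal.finprod_heightOneSpectrum_factorization' K hne
  set J : FractionalIdeal R⁰ K :=
    ∏ᶠ v : HeightOneSpectrum R, (v.asIdeal : FractionalIdeal R⁰ K) ^ n v with hJ
  have hJ2 : J ^ 2 = .spanSingleton R⁰ (a : K) := by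
    rw [← hprod, hJ, finprod_pow]
    · refine finprod_congr fun v ↦ ?_
      rw [hn, zpow_mul]
      exact (zpow_ofNat _ 2).symm
    · refine Set.Finite.subset (FractionalIdeal.finite_factors
        (FractionalIdeal.spanSingleton R⁰ (a : K))) fun v hv h ↦ hv ?_
      have : n v * 2 = 0 := (hn v).symm.trans h
      have : n v = 0 := by lia
      simp [this]
  have hJ0 : J ≠ 0 := by
    intro h
    rw [h] at hJ2
    exact hne (by rw [← hJ2]; simp)
  exact ⟨Units.mk0 J hJ0, Units.ext (by simpa using hJ2)⟩

theorem mem_range_units_map_of_toPrincipalIdeal_eq_one {u : Kˣ} (hu : toPrincipalIdeal R K u = 1) :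
    u ∈ (Units.map (algebraMap R K : R →* K)).range := by
  have h : FractionalIdeal.spanSingleton R⁰ (1 : K) = .spanSingleton R⁰ (u : K) := by
    simpa using (toPrincipalIdeal_eq_iff.mp hu).symm
  obtain ⟨z, hz⟩ := FractionalIdeal.spanSingleton_eq_spanSingleton.mp h
  exact ⟨z, Units.ext (by simpa [Units.smul_def, Algebra.smul_def] using hz)⟩

variable [Finite (ClassGroup R)]

theorem relIndex_units_sup_squares_ne_zero :
    ((Units.map (algebraMap R K : R →* K)).range ⊔ (powMonoidHom 2 : Kˣ →* Kˣ).range).relIndex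
      (evenOutside K (∅ : Set (HeightOneSpectrum R))) ≠ 0 := by
  have : Finite ((FractionalIdeal R⁰ K)ˣ ⧸ (toPrincipalIdeal R K).range) :=
    Finite.of_equiv _ (ClassGroup.equiv K).toEquiv
  choose I hI using fun a : evenOutside K (∅ : Set (HeightOneSpectrum R)) ↦
    exists_sq_eq_toPrincipalIdeal a.2
  refine Subgroup.relIndex_ne_zero_of_separating
    (fun a ↦ (I a : (FractionalIdeal R⁰ K)ˣ ⧸ (toPrincipalIdeal R K).range)) fun a b hab ↦ ?_
  obtain ⟨x, hx⟩ := QuotientGroup.eq_iff_div_mem.mp hab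
  refine Subgroup.mem_sup.mpr ⟨a / b / x ^ 2, ?_, x ^ 2, ⟨x, rfl⟩, by simp⟩
  apply mem_range_units_map_of_toPrincipalIdeal_eq_one
  rw [map_div, map_div, map_pow, hx, ← hI, ← hI, div_pow, div_self']

variable [Group.FG Rˣ]

theorem relIndex_squares_evenOutside_ne_zero {S : Set (HeightOneSpectrum R)} (hS : S.Finite) :
    (powMonoidHom 2 : Kˣ →* Kˣ).range.relIndex (evenOutside K S) ≠ 0 := by
  refine Subgroup.relIndex_ne_zero_trans (Subgroup.relIndex_ne_zero_trans ?_
    (relIndex_units_sup_squares_ne_zero (R := R))) (relIndex_evenOutside_empty_ne_zero hS)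
  rw [Subgroup.relIndex_sup_right, ← Subgroup.index_comap]
  have := Subgroup.finiteIndex_range_powMonoidHom_of_fg Rˣ two_ne_zero
  have hle : (powMonoidHom 2 : Rˣ →* Rˣ).range ≤
      (powMonoidHom 2 : Kˣ →* Kˣ).range.comap (Units.map (algebraMap R K : R →* K)) := by
    rintro _ ⟨u, rfl⟩
    exact ⟨Units.map (algebraMap R K : R →* K) u, by simp⟩
  exact (Subgroup.finiteIndex_of_le hle).index_ne_zero

end arithmetic

theorem AddSubgroup.finiteIndex_of_separating {G ι : Type*} [AddCommGroup G] [Finite ι]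
    {H : AddSubgroup G} (f : G → ι) (hf : ∀ a b, f a = f b → a - b ∈ H) : H.FiniteIndex := by
  have : Finite (G ⧸ H) := by
    refine Finite.of_injective (fun q ↦ f q.out) fun p q hpq ↦ ?_
    rw [← QuotientAddGroup.out_eq' p, ← QuotientAddGroup.out_eq' q,
      QuotientAddGroup.eq_iff_sub_mem]
    exact hf _ _ hpq
  exact AddSubgroup.finiteIndex_of_finite_quotient

section valuation

variable {R K : Type*} [CommRing R] [IsDedekindDomain R] [Field K] [Algebra R K]
  [IsFractionRing R K]

theorem IsDedekindDomain.HeightOneSpectrum.isSquare_valuationOfNeZero (v : HeightOneSpectrum R)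
    {a b c y : Kˣ} (h : a * b * c = y ^ 2) (hab : v.valuation K (a - b : K) = 1)
    (hac : v.valuation K (a - c : K) = 1) : IsSquare (v.valuationOfNeZero a) := by
  have hv : v.valuationOfNeZero a * v.valuationOfNeZero b * v.valuationOfNeZero c =
      v.valuationOfNeZero y ^ 2 := by
    rw [← map_mul, ← map_mul, h, map_pow]
  have transfer {d e : Kˣ} (hde : v.valuation K (d : K) = v.valuation K (e : K)) :
      v.valuationOfNeZero d = v.valuationOfNeZero e := by
    rw [← WithZero.coe_inj, v.valuationOfNeZero_eq, v.valuationOfNeZero_eq, hde]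
  have hsub (d : Kˣ) : (d : K) = a - (a - d) := by ring
  rcases lt_trichotomy (v.valuation K (a : K)) 1 with ha | ha | ha
  · have hone {d : Kˣ} (hd : v.valuation K (a - d : K) = 1) : v.valuationOfNeZero d = 1 := by
      rw [← map_one (v.valuationOfNeZero (K := K))]
      refine transfer ?_
      rw [hsub d, Valuation.map_sub_eq_of_lt_right _ (by rwa [hd]), hd]
      simp
    rw [hone hab, hone hac, mul_one, mul_one] at hv
    exact ⟨_, hv.trans (sq _)⟩
  · rw [transfer (d := a) (e := 1) (by simpa using ha), map_one]
    exact IsSquare.one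
  · have heq {d : Kˣ} (hd : v.valuation K (a - d : K) = 1) :
        v.valuationOfNeZero d = v.valuationOfNeZero a := by
      refine transfer ?_
      rw [hsub d, Valuation.map_sub_eq_of_lt_left _ (by rwa [hd])]
    rw [heq hab, heq hac] at hv
    refine ⟨v.valuationOfNeZero y / v.valuationOfNeZero a, ?_⟩
    rw [div_mul_div_comm, ← sq, ← hv, mul_assoc, mul_div_cancel_right]

variable (R) in
theorem IsDedekindDomain.HeightOneSpectrum.finite_setOf_valuation_ne_one {a : K} (ha : a ≠ 0) :
    {v : HeightOneSpectrum R | v.valuation K a ≠ 1}.Finite := by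
  refine ((HeightOneSpectrum.Support.finite R a).union
    (HeightOneSpectrum.Support.finite R a⁻¹)).subset fun v hv ↦ ?_
  rcases lt_or_gt_of_ne hv with h | h
  · refine Or.inr ?_
    change 1 < v.valuation K a⁻¹
    rw [map_inv₀]
    exact (one_lt_inv₀ (by simpa [zero_lt_iff] using ha)).mpr h
  · exact Or.inl h

end valuation

namespace WeierstrassCurve

section Field

variable {K : Type*} [Field K]

/-- The `2`-division polynomial of `W` splits with roots `e 0`, `e 1`, `e 2`, and these are
pairwise distinct. -/
structure HasTwoTorsionRoots (W : WeierstrassCurve K) (e : Fin 3 → K) : Prop where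
  b₂_eq : W.b₂ = -4 * (e 0 + e 1 + e 2)
  b₄_eq : W.b₄ = 2 * (e 0 * e 1 + e 0 * e 2 + e 1 * e 2)
  b₆_eq : W.b₆ = -4 * (e 0 * e 1 * e 2)
  injective : Function.Injective e

namespace HasTwoTorsionRoots

variable {W : WeierstrassCurve K} {e : Fin 3 → K}

theorem sq_eq (he : W.HasTwoTorsionRoots e)
    {x y : K} (h : W.toAffine.Equation x y) :
    (2 * y + W.a₁ * x + W.a₃) ^ 2 = 4 * ((x - e 0) * (x - e 1) * (x - e 2)) := by
  have h2 := he.b₂_eq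
  have h4 := he.b₄_eq
  have h6 := he.b₆_eq
  rw [Affine.equation_iff] at h
  rw [b₂] at h2
  rw [b₄] at h4
  rw [b₆] at h6
  linear_combination 4 * h + x ^ 2 * h2 + 2 * x * h4 + h6

theorem eval_root (he : W.HasTwoTorsionRoots e)
    (i : Fin 3) :
    4 * e i ^ 3 + W.b₂ * e i ^ 2 + 2 * W.b₄ * e i + W.b₆ = 0 := by
  rw [he.b₂_eq, he.b₄_eq, he.b₆_eq]
  fin_cases i <;> simp <;> ring

variable [DecidableEq K]

/-- The chord through two points on the curve, evaluated at a root of the `2`-division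
polynomial. -/
theorem addX_sub_mul (he : W.HasTwoTorsionRoots e)
    {x₁ x₂ y₁ y₂ : K} (h₁ : W.toAffine.Equation x₁ y₁)
    (h₂ : W.toAffine.Equation x₂ y₂) (hx : x₁ ≠ x₂) (i : Fin 3) :
    ∃ m : K, 4 * ((W.toAffine.addX x₁ x₂ (W.toAffine.slope x₁ x₂ y₁ y₂) - e i) *
      ((x₁ - e i) * (x₂ - e i))) = m ^ 2 := by
  set ℓ := W.toAffine.slope x₁ x₂ y₁ y₂ with hℓ
  have h := congrArg (Polynomial.eval (e i))
    (Affine.addPolynomial_slope h₁ h₂ fun h ↦ hx h.1)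
  rw [Affine.addPolynomial_eq] at h
  simp only [Cubic.toPoly, ← hℓ] at h
  simp at h
  have hr := he.eval_root i
  rw [b₂, b₄, b₆] at hr
  refine ⟨2 * (ℓ * (e i - x₁) + y₁) + W.a₁ * e i + W.a₃, ?_⟩
  simp only [Affine.addX] at h ⊢
  linear_combination -4 * h - hr

variable [W.IsElliptic] [NeZero (2 : K)]

theorem exists_add_self_eq (he : W.HasTwoTorsionRoots e)
    {x y : K} (h : W.toAffine.Nonsingular x y) {t : Fin 3 → K}
    (ht : ∀ i, x - e i = t i ^ 2) : ∃ Q : W.toAffine.Point, Q + Q = .some x y h := by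
  have two0 : (2 : K) ≠ 0 := NeZero.ne 2
  -- normalize the sign of the square roots
  obtain ⟨r, s, t, hr, hs, ht, hy⟩ : ∃ r s t : K, x - e 0 = r ^ 2 ∧ x - e 1 = s ^ 2 ∧
      x - e 2 = t ^ 2 ∧ 2 * y + W.a₁ * x + W.a₃ = 2 * (r * s * t) := by
    have hsq := he.sq_eq h.1
    rw [ht, ht, ht] at hsq
    have hsq' : (2 * y + W.a₁ * x + W.a₃) ^ 2 = (2 * (t 0 * t 1 * t 2)) ^ 2 := by
      rw [hsq]; ring
    rcases sq_eq_sq_iff_eq_or_eq_neg.mp hsq' with H | H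
    · exact ⟨t 0, t 1, t 2, ht 0, ht 1, ht 2, H⟩
    · exact ⟨-t 0, t 1, t 2, by rw [ht]; ring, ht 1, ht 2, by rw [H]; ring⟩
  have h01 : r ^ 2 - s ^ 2 ≠ 0 := by
    rw [← hr, ← hs, sub_sub_sub_cancel_left, sub_ne_zero]
    exact he.injective.ne (by decide)
  have h02 : r ^ 2 - t ^ 2 ≠ 0 := by
    rw [← hr, ← ht, sub_sub_sub_cancel_left, sub_ne_zero]
    exact he.injective.ne (by decide)
  have h12 : s ^ 2 - t ^ 2 ≠ 0 := by
    rw [← hs, ← ht, sub_sub_sub_cancel_left, sub_ne_zero]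
    exact he.injective.ne (by decide)
  have hrs : r + s ≠ 0 := fun h ↦ h01 (by linear_combination (r - s) * h)
  have hrt : r + t ≠ 0 := fun h ↦ h02 (by linear_combination (r - t) * h)
  have hst : s + t ≠ 0 := fun h ↦ h12 (by linear_combination (s - t) * h)
  have h2 := he.b₂_eq
  have h4 := he.b₄_eq
  have h6 := he.b₆_eq
  rw [sub_eq_iff_eq_add', ← sub_eq_iff_eq_add] at hr hs ht
  rw [b₂, ← hr, ← hs, ← ht] at h2
  rw [b₄, ← hr, ← hs, ← ht] at h4
  rw [b₆, ← hr, ← hs, ← ht] at h6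
  set u : K := x + (r * s + r * t + s * t) with hu
  set w : K := (2 * ((r + s) * (r + t) * (s + t)) - W.a₁ * u - W.a₃) / 2 with hw
  have hw' : 2 * w = 2 * ((r + s) * (r + t) * (s + t)) - W.a₁ * u - W.a₃ :=
    mul_div_cancel₀ _ two0
  have heq : W.toAffine.Equation u w := by
    rw [Affine.equation_iff]
    refine mul_left_cancel₀ (mul_ne_zero two0 two0) ?_
    linear_combination (2 * w + W.a₁ * u + W.a₃ + 2 * ((r + s) * (r + t) * (s + t))) * hw' -
      u ^ 2 * h2 - 2 * u * h4 - h6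
  have hns : W.toAffine.Nonsingular u w := Affine.equation_iff_nonsingular.mp heq
  have hsub : w - W.toAffine.negY u w = 2 * ((r + s) * (r + t) * (s + t)) := by
    rw [Affine.negY]
    linear_combination hw'
  have hne : w ≠ W.toAffine.negY u w := by
    rw [← sub_ne_zero, hsub]
    exact mul_ne_zero two0 (mul_ne_zero (mul_ne_zero hrs hrt) hst)
  have hslope : 2 * W.toAffine.slope u u w w = 2 * (r + s + t) - W.a₁ := by
    rw [Affine.slope_of_Y_ne rfl hne, hsub, mul_div_assoc', div_eq_iff
      (mul_ne_zero two0 (mul_ne_zero (mul_ne_zero hrs hrt) hst))]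
    refine mul_left_cancel₀ two0 ?_
    linear_combination -2 * W.a₁ * hw' + 2 * u * h2 + 2 * h4
  have hX : W.toAffine.addX u u (W.toAffine.slope u u w w) = x := by
    refine mul_left_cancel₀ (mul_ne_zero two0 two0) ?_
    rw [Affine.addX]
    linear_combination (2 * W.toAffine.slope u u w w + 2 * (r + s + t) + W.a₁) * hslope - h2
  refine ⟨.some u w hns, ?_⟩
  rw [Affine.Point.add_self_of_Y_ne hne]
  simp only [Affine.Point.some.injEq]
  refine ⟨hX, mul_left_cancel₀ two0 ?_⟩
  rw [Affine.addY, Affine.negAddY, hX, Affine.negY]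
  linear_combination - hw' - hy - (x - u) * hslope

/-- Two affine points whose `x`-coordinates have the same class modulo squares with respect to
every root of the `2`-division polynomial differ by an element of `2E(K)`. -/
theorem some_sub_some_mem_range (he : W.HasTwoTorsionRoots e)
    {x₁ x₂ y₁ y₂ : K}
    (h₁ : W.toAffine.Nonsingular x₁ y₁)
    (h₂ : W.toAffine.Nonsingular x₂ y₂) (hne : ∀ i, (x₁ - e i) * (x₂ - e i) ≠ 0)
    (hsq : ∀ i, IsSquare ((x₁ - e i) * (x₂ - e i))) :
    Affine.Point.some x₁ y₁ h₁ - .some x₂ y₂ h₂ ∈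
      (nsmulAddMonoidHom (α := W.toAffine.Point) 2).range := by
  have two0 : (2 : K) ≠ 0 := NeZero.ne 2
  by_cases hx : x₁ = x₂
  · rcases Affine.Point.X_eq_iff (h₁ := h₁) (h₂ := h₂) |>.mp hx with h | h
    · rw [h, sub_self]
      exact zero_mem _
    · rw [h]
      exact ⟨-.some x₂ y₂ h₂, by simp [two_nsmul, sub_eq_add_neg]⟩
  · have hroot (i : Fin 3) :
        ∃ t, W.toAffine.addX x₁ x₂ (W.toAffine.slope x₁ x₂ y₁ y₂) - e i = t ^ 2 := by
      obtain ⟨m, hm⟩ := he.addX_sub_mul h₁.1 h₂.1 hx i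
      obtain ⟨c, hc⟩ := hsq i
      have hc0 : c ≠ 0 := by
        rintro rfl
        exact hne i (by simpa using hc)
      refine ⟨m / (2 * c), ?_⟩
      rw [hc] at hm
      rw [div_pow, eq_div_iff (by positivity), ← hm]
      ring
    choose t ht using hroot
    obtain ⟨Q, hQ⟩ := he.exists_add_self_eq
      (Affine.nonsingular_add h₁ h₂ fun h ↦ hx h.1) ht
    rw [← Affine.Point.add_of_X_ne (h₁ := h₁) (h₂ := h₂) hx] at hQ
    refine ⟨Q - .some x₂ y₂ h₂, ?_⟩
    rw [nsmulAddMonoidHom_apply, nsmul_sub, two_nsmul, hQ, two_nsmul]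
    abel

end HasTwoTorsionRoots

theorem Affine.Point.finite_setOf_xRep_mem (W : Affine K) {T : Set (Fin 2 → K)} (hT : T.Finite) :
    {P : W.Point | P.xRep ∈ T}.Finite := by
  refine Set.Finite.preimage' hT fun t _ ↦ ?_
  by_cases h : ∃ P : W.Point, P.xRep = t
  · obtain ⟨P, rfl⟩ := h
    exact (Set.toFinite {P, -P}).subset fun Q hQ ↦ eq_or_eq_neg_of_xRep_eq_xRep hQ
  · convert Set.finite_empty
    exact Set.eq_empty_of_forall_notMem fun P hP ↦ h ⟨P, hP⟩

end Field

section AddSub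

open Affine.Point
variable {K : Type*} [Field K] (W : WeierstrassCurve K)

theorem eval_addSubMap (s t u : K) :
    (fun i ↦ (addSubMap W i).eval ![s, t, u]) =
      ![s ^ 2 - W.b₄ * s * u - W.b₆ * t * u - W.b₈ * u ^ 2,
        2 * t * s + W.b₂ * s * u + W.b₄ * t * u + W.b₆ * u ^ 2, t ^ 2 - 4 * s * u] := by
  ext i
  fin_cases i <;> simp [addSubMap]

theorem eval_addSubMap_some_some_of_ne [CharZero K] [DecidableEq K] {x₁ x₂ y₁ y₂ : K}
    (h₁ : W.toAffine.Nonsingular x₁ y₁)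
    (h₂ : W.toAffine.Nonsingular x₂ y₂) (hx : x₁ ≠ x₂) :
    (fun i ↦ (addSubMap W i).eval ((some _ _ h₁).sym2x (some _ _ h₂))) =
      (x₁ - x₂) ^ 2 • (some _ _ h₁ + some _ _ h₂).sym2x (some _ _ h₁ - some _ _ h₂) := by
  have hD : x₁ - x₂ ≠ 0 := sub_ne_zero.mpr hx
  rw [sub_eq_add_neg (some _ _ h₁), neg_some, add_of_X_ne hx, add_of_X_ne hx, sym2x_some_some, sym2x_some_some,
    eval_addSubMap]
  have e₁ := (Affine.equation_iff ..).mp h₁.1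
  have e₂ := (Affine.equation_iff ..).mp h₂.1
  rw [Affine.slope_of_X_ne hx, Affine.slope_of_X_ne hx, Affine.addX, Affine.addX, Affine.negY]
  ext i
  fin_cases i
  · simp [b₂, b₄, b₆, b₈]
    field_simp
    have g₁ : (2 * y₁ + W.a₁ * x₁ + W.a₃) ^ 2 =
        4 * x₁ ^ 3 + W.b₂ * x₁ ^ 2 + 2 * W.b₄ * x₁ + W.b₆ := by
      rw [b₂, b₄, b₆]
      linear_combination 4 * e₁
    have g₂ : (2 * y₂ + W.a₁ * x₂ + W.a₃) ^ 2 =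
        4 * x₂ ^ 3 + W.b₂ * x₂ ^ 2 + 2 * W.b₄ * x₂ + W.b₆ := by
      rw [b₂, b₄, b₆]
      linear_combination 4 * e₂
    rw [b₂, b₄, b₆] at g₁ g₂
    linear_combination (-1 / 16) * (((2 * y₁ + W.a₁ * x₁ + W.a₃) ^ 2 +
      (2 * y₂ + W.a₁ * x₂ + W.a₃) ^ 2 +
      (4 * x₁ ^ 3 + (W.a₁ ^ 2 + 4 * W.a₂) * x₁ ^ 2 + 2 * (2 * W.a₄ + W.a₁ * W.a₃) * x₁ +
        (W.a₃ ^ 2 + 4 * W.a₆)) + (4 * x₂ ^ 3 + (W.a₁ ^ 2 + 4 * W.a₂) * x₂ ^ 2 +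
        2 * (2 * W.a₄ + W.a₁ * W.a₃) * x₂ + (W.a₃ ^ 2 + 4 * W.a₆)) -
      2 * (x₁ - x₂) ^ 2 * (W.a₁ ^ 2 + 4 * W.a₂ + 4 * x₁ + 4 * x₂)) * (g₁ + g₂) -
      4 * ((2 * y₂ + W.a₁ * x₂ + W.a₃) ^ 2 * g₁ +
      (4 * x₁ ^ 3 + (W.a₁ ^ 2 + 4 * W.a₂) * x₁ ^ 2 + 2 * (2 * W.a₄ + W.a₁ * W.a₃) * x₁ +
        (W.a₃ ^ 2 + 4 * W.a₆)) * g₂))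
  · simp [b₂, b₄, b₆, b₈]
    field_simp
    linear_combination -2 * e₁ - 2 * e₂
  · simp
    ring

theorem eval_addSubMap_some_self [DecidableEq K] {x y : K} (h : W.toAffine.Nonsingular x y)
    (hy : y ≠ W.toAffine.negY x y) :
    (fun i ↦ (addSubMap W i).eval ((some _ _ h).sym2x (some _ _ h))) =
      (y - W.toAffine.negY x y) ^ 2 • (some _ _ h + some _ _ h).sym2x 0 := by
  rw [add_self_of_Y_ne hy, sym2x_some_some, sym2x_some_zero, eval_addSubMap]
  have e := (Affine.equation_iff ..).mp h.1
  rw [Affine.slope_of_Y_ne rfl hy, Affine.addX]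
  have hD : y - W.toAffine.negY x y ≠ 0 := sub_ne_zero.mpr hy
  obtain ⟨η, hη⟩ : ∃ η, y - W.toAffine.negY x y = η := ⟨_, rfl⟩
  rw [hη] at hD ⊢
  rw [Affine.negY] at hη
  ext i
  fin_cases i
  · simp [b₂, b₄, b₆, b₈]
    field_simp
    subst hη
    linear_combination (W.a₁ ^ 2 + 4 * W.a₂ + 8 * x) * e
  · simp [b₂, b₄, b₆, b₈]
    subst hη
    linear_combination -4 * e
  · simp
    ring

theorem exists_eval_addSubMap_eq_smul [CharZero K] [DecidableEq K] [W.IsElliptic]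
    (P Q : W.toAffine.Point) :
    ∃ c : K, c ≠ 0 ∧
      (fun i ↦ (addSubMap W i).eval (P.sym2x Q)) = c • (P + Q).sym2x (P - Q) := by
  have hself (P : W.toAffine.Point) : ∃ c : K, c ≠ 0 ∧
      (fun i ↦ (addSubMap W i).eval (P.sym2x P)) = c • (P + P).sym2x 0 := by
    rcases P with _ | ⟨x, y, h⟩
    · rw [← zero_def, add_zero, sym2x_zero_zero, eval_addSubMap]
      exact ⟨1, one_ne_zero, by simp⟩
    · by_cases hy : y = W.toAffine.negY x y
      · have hne := addSubMap_ne_zero W (sym2x_ne_zero (some x y h) (some x y h))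
        rw [sym2x_some_some, eval_addSubMap] at hne ⊢
        rw [add_self_of_Y_eq hy, sym2x_zero_zero]
        have e := (Affine.equation_iff ..).mp h.1
        have h1 : 2 * (x + x) * (x * x) + W.b₂ * (x * x) * 1 + W.b₄ * (x + x) * 1 + W.b₆ * 1 ^ 2 =
            0 := by
          rw [Affine.negY] at hy
          rw [b₂, b₄, b₆]
          linear_combination -4 * e + (2 * y + W.a₁ * x + W.a₃) * hy
        have h2 : (x + x) ^ 2 - 4 * (x * x) * 1 = 0 := by ring
        rw [h1, h2] at hne ⊢
        refine ⟨(x * x) ^ 2 - W.b₄ * (x * x) * 1 - W.b₆ * (x + x) * 1 - W.b₈ * 1 ^ 2,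
          fun h0 ↦ hne ?_, by simp⟩
        rw [h0]
        simp
      · exact ⟨_, pow_ne_zero 2 (sub_ne_zero.mpr hy), eval_addSubMap_some_self W h hy⟩
  by_cases hPQ : P.xRep = Q.xRep
  · rcases eq_or_eq_neg_of_xRep_eq_xRep hPQ with rfl | rfl
    · simpa using hself P
    · rw [sym2x_neg_left, neg_add_cancel, sym2x_comm 0, ← sym2x_neg_left (-Q - Q), neg_sub,
        sub_neg_eq_add]
      exact hself Q
  · rcases P with _ | ⟨x₁, y₁, h₁⟩ <;> rcases Q with _ | ⟨x₂, y₂, h₂⟩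
    · exact absurd rfl hPQ
    · rw [← zero_def, zero_add, zero_sub, sym2x_neg_right, sym2x_zero_some, sym2x_some_some,
        eval_addSubMap]
      exact ⟨1, one_ne_zero, by simp [sq, two_mul]⟩
    · rw [← zero_def, add_zero, sub_zero, sym2x_some_zero, sym2x_some_some, eval_addSubMap]
      exact ⟨1, one_ne_zero, by simp [sq, two_mul]⟩
    · have hx : x₁ ≠ x₂ := fun h ↦ hPQ (by simp [h])
      exact ⟨_, pow_ne_zero 2 (sub_ne_zero.mpr hx), eval_addSubMap_some_some_of_ne W h₁ h₂ hx⟩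

section Height

open Height

theorem abs_logHeight_sym2x_sub_le [AdmissibleAbsValues K] : ∃ C, ∀ P Q : W.toAffine.Point,
    |logHeight (P.sym2x Q) - (logHeight P.xRep + logHeight Q.xRep)| ≤ C := by
  obtain ⟨C, hC⟩ := abs_logHeight_sym2_sub_le K
  refine ⟨C, fun P Q ↦ ?_⟩
  have hvec (v : Fin 2 → K) : ![v 0, v 1] = v := by
    ext i
    fin_cases i <;> rfl
  have := hC (a := P.xRep 0) (b := P.xRep 1) (c := Q.xRep 0) (d := Q.xRep 1)
    (by rw [hvec]; exact P.xRep_ne_zero) (by rw [hvec]; exact Q.xRep_ne_zero)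
  rwa [hvec, hvec] at this

/-- The approximate parallelogram law for the naïve height. -/
theorem abs_logHeight_xRep_parallelogram_le [CharZero K] [DecidableEq K] [AdmissibleAbsValues K]
    [W.IsElliptic] :
    ∃ C, ∀ P Q : W.toAffine.Point,
      |logHeight (P + Q).xRep + logHeight (P - Q).xRep -
        2 * (logHeight P.xRep + logHeight Q.xRep)| ≤ C := by
  obtain ⟨C₁, hC₁⟩ := abs_logHeight_addSubMap_sub_two_mul_logHeight_le W
  obtain ⟨C₂, hC₂⟩ := W.abs_logHeight_sym2x_sub_le
  refine ⟨C₁ + 3 * C₂, fun P Q ↦ ?_⟩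
  obtain ⟨c, hc, h⟩ := W.exists_eval_addSubMap_eq_smul P Q
  have h₁ := hC₁ (P.sym2x Q)
  rw [h, logHeight_smul_eq_logHeight _ hc] at h₁
  have h₂ := hC₂ P Q
  have h₃ := hC₂ (P + Q) (P - Q)
  rw [abs_le] at *
  constructor <;> linarith

theorem northcott_logHeight_xRep {K : Type*} [Field K] [NumberField K] (W : WeierstrassCurve K) :
    Northcott fun P : W.toAffine.Point ↦ logHeight P.xRep where
  finite_le B := by
    refine (finite_setOf_xRep_mem W.toAffine (T := insert ![1, 0]
      ((fun x : K ↦ ![x, 1]) '' {x | logHeight₁ x ≤ B})) ?_).subset fun P hP ↦ ?_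
    · exact ((Northcott.finite_le (h := logHeight₁ (K := K)) B).image _).insert _
    · rcases P with _ | ⟨x, y, h⟩
      · exact Set.mem_insert _ _
      · refine Set.mem_insert_of_mem _ ⟨x, ?_, rfl⟩
        rw [Set.mem_ofPred_eq, logHeight₁_eq_logHeight]
        exact hP

end Height

end AddSub

section NumberField

variable {K : Type*} [Field K] [NumberField K] {W : WeierstrassCurve K} {e : Fin 3 → K}

open NumberField

theorem HasTwoTorsionRoots.mem_evenOutside (he : W.HasTwoTorsionRoots e) {x y : K}
    (h : W.toAffine.Equation x y) {a : Fin 3 → Kˣ} (ha : ∀ i, (a i : K) = x - e i) (i : Fin 3) :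
    a i ∈ evenOutside K {v : HeightOneSpectrum (𝓞 K) |
      ∃ p : Fin 3 × Fin 3, p.1 ≠ p.2 ∧ v.valuation K (e p.1 - e p.2) ≠ 1} := by
  intro v hv
  simp only [Set.mem_ofPred_eq, Prod.exists, not_exists, not_and, not_not] at hv
  have hsub {j k : Fin 3} (hjk : j ≠ k) : v.valuation K (a j - a k : K) = 1 := by
    rw [ha, ha, sub_sub_sub_cancel_left]
    exact hv k j hjk.symm
  have hprod : ((2 * y + W.a₁ * x + W.a₃) / 2) ^ 2 = (a 0 * a 1 * a 2 : K) := by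
    rw [div_pow, he.sq_eq h, ha, ha, ha]
    ring
  have hne : (2 * y + W.a₁ * x + W.a₃) / 2 ≠ 0 := by
    intro h0
    rw [h0] at hprod
    exact (a 0 * a 1 * a 2).ne_zero (by simpa using hprod.symm)
  have key : a 0 * a 1 * a 2 = Units.mk0 _ hne ^ 2 := Units.ext (by simpa using hprod.symm)
  fin_cases i
  · exact v.isSquare_valuationOfNeZero key (hsub (by decide)) (hsub (by decide))
  · exact v.isSquare_valuationOfNeZero ((by rw [mul_comm (a 1)] : a 1 * a 0 * a 2 = _).trans key)
      (hsub (by decide)) (hsub (by decide))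
  · exact v.isSquare_valuationOfNeZero
      ((by rw [mul_comm (a 2), mul_assoc, mul_comm (a 2), ← mul_assoc] :
        a 2 * a 0 * a 1 = _).trans key)
      (hsub (by decide)) (hsub (by decide))

/-- **Weak Mordell–Weil theorem** for elliptic curves with full rational `2`-torsion. -/
theorem HasTwoTorsionRoots.finiteIndex_range_two_nsmul [DecidableEq K] [W.IsElliptic]
    (he : W.HasTwoTorsionRoots e) :
    (nsmulAddMonoidHom (α := W.toAffine.Point) 2).range.FiniteIndex := by
  set S : Set (HeightOneSpectrum (𝓞 K)) :=
    {v | ∃ p : Fin 3 × Fin 3, p.1 ≠ p.2 ∧ v.valuation K (e p.1 - e p.2) ≠ 1}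
  have hS : S.Finite := by
    refine (Set.finite_iUnion fun p : {p : Fin 3 × Fin 3 // p.1 ≠ p.2} ↦
      HeightOneSpectrum.finite_setOf_valuation_ne_one (𝓞 K)
        (sub_ne_zero.mpr (he.injective.ne p.2))).subset ?_
    rintro v ⟨p, hp, hv⟩
    exact Set.mem_iUnion.mpr ⟨⟨p, hp⟩, hv⟩
  have : Group.FG (𝓞 K)ˣ := Group.fg_iff_monoid_fg.mpr inferInstance
  have : Finite (evenOutside K S ⧸ (powMonoidHom 2 : Kˣ →* Kˣ).range.subgroupOf (evenOutside K S)) :=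
    have : ((powMonoidHom 2 : Kˣ →* Kˣ).range.subgroupOf (evenOutside K S)).FiniteIndex :=
      ⟨relIndex_squares_evenOutside_ne_zero hS⟩
    inferInstance
  set B : Set W.toAffine.Point := {P | P.xRep ∈ insert ![1, 0] (Set.range fun i ↦ ![e i, 1])}
  have hB : B.Finite := Affine.Point.finite_setOf_xRep_mem _ (Set.toFinite _)
  have := hB.to_subtype
  have hgood (P : W.toAffine.Point) (hP : P ∉ B) : ∃ a : Fin 3 → evenOutside K S,
      ∃ x y h, P = .some x y h ∧ ∀ i, ((a i : Kˣ) : K) = x - e i := by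
    rcases P with _ | ⟨x, y, h⟩
    · exact absurd (Set.mem_insert _ _) hP
    · have hx (i : Fin 3) : x - e i ≠ 0 := fun hi ↦
        hP (Set.mem_insert_of_mem _ ⟨i, by simp [sub_eq_zero.mp hi]⟩)
      exact ⟨fun i ↦ ⟨Units.mk0 _ (hx i), he.mem_evenOutside h.1
        (a := fun i ↦ Units.mk0 _ (hx i)) (fun _ ↦ rfl) i⟩, x, y, h, rfl, fun _ ↦ rfl⟩
  choose! a x y h hP ha using hgood
  classical
  let f (P : W.toAffine.Point) : B ⊕ (Fin 3 →
      evenOutside K S ⧸ (powMonoidHom 2 : Kˣ →* Kˣ).range.subgroupOf (evenOutside K S)) :=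
    if hPB : P ∈ B then .inl ⟨P, hPB⟩ else .inr fun i ↦ a P i
  refine AddSubgroup.finiteIndex_of_separating f fun P Q hPQ ↦ ?_
  by_cases hPB : P ∈ B <;> by_cases hQB : Q ∈ B <;>
    simp only [f, hPB, hQB, dif_pos, dif_neg, not_false_eq_true, Sum.inl.injEq, Sum.inr.injEq,
      Subtype.mk.injEq, reduceCtorEq] at hPQ
  · rw [hPQ, sub_self]
    exact zero_mem _
  · rw [hP P hPB, hP Q hQB]
    have hcoe (i : Fin 3) : (x P - e i) * (x Q - e i) = ((a P i * a Q i : Kˣ) : K) := by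
      rw [Units.val_mul, ha P hPB, ha Q hQB]
    refine he.some_sub_some_mem_range _ _ (fun i ↦ ?_) fun i ↦ ?_
    · rw [hcoe]
      exact Units.ne_zero _
    · obtain ⟨c, hc⟩ := QuotientGroup.eq_iff_div_mem.mp (congrFun hPQ i)
      have hc' : c ^ 2 = (a P i : Kˣ) / a Q i := hc
      refine ⟨((c * a Q i : Kˣ) : K), ?_⟩
      rw [hcoe, ← Units.val_mul, ← sq, mul_pow, hc', sq, div_mul_eq_mul_div, ← mul_assoc,
        mul_div_cancel_right]

/-- **Mordell–Weil theorem** for elliptic curves over number fields with full rational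
`2`-torsion. -/
theorem HasTwoTorsionRoots.fg_point [DecidableEq K] [W.IsElliptic] (he : W.HasTwoTorsionRoots e) :
    AddGroup.FG W.toAffine.Point := by
  obtain ⟨C, hC⟩ := W.abs_logHeight_xRep_parallelogram_le
  have := W.northcott_logHeight_xRep
  exact AddCommGroup.fg_of_descent' he.finiteIndex_range_two_nsmul
    (fun P ↦ Height.logHeight_nonneg P.xRep) hC

end NumberField

/-- Over a splitting field of the `2`-division polynomial, an elliptic curve has full rational
`2`-torsion. -/
theorem exists_hasTwoTorsionRoots_map {F L : Type*} [Field F] [CharZero F] [Field L]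
    (E : WeierstrassCurve F) [E.IsElliptic] (φ : F →+* L)
    (h : (E.twoTorsionPolynomial.toPoly.map φ).Splits) :
    ∃ e, (E.map φ).HasTwoTorsionRoots e := by
  have ha : E.twoTorsionPolynomial.a ≠ 0 := by
    change (4 : F) ≠ 0
    norm_num
  have h2 : (2 : L) ≠ 0 := by
    rw [← map_ofNat φ 2, map_ne_zero φ]
    exact two_ne_zero
  obtain ⟨x, y, z, hroots⟩ := (Cubic.splits_iff_roots_eq_three ha).mp h
  have hb := Cubic.b_eq_three_roots ha hroots
  have hc := Cubic.c_eq_three_roots ha hroots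
  have hd := Cubic.d_eq_three_roots ha hroots
  obtain ⟨hxy, hxz, hyz⟩ := (Cubic.discr_ne_zero_iff_roots_ne ha hroots).mp
    (E.twoTorsionPolynomial_discr_ne_zero (isUnit_iff_ne_zero.mpr two_ne_zero) E.isUnit_Δ)
  simp only [twoTorsionPolynomial, map_ofNat, map_mul] at hb hc hd
  refine ⟨![x, y, z], ⟨?_, ?_, ?_, ?_⟩⟩
  · simp only [map_b₂, Matrix.cons_val]
    linear_combination hb
  · refine mul_left_cancel₀ h2 ?_
    simp only [map_b₄, Matrix.cons_val]
    linear_combination hc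
  · simp only [map_b₆, Matrix.cons_val]
    linear_combination hd
  · intro i j hij
    fin_cases i <;> fin_cases j <;> simp_all

end WeierstrassCurve

/-- **Mordell's theorem**: for an elliptic curve `E` defined over `ℚ` (a Weierstrass
curve with nonzero, i.e. invertible, discriminant), the group `E(ℚ)` of rational
points is a finitely generated abelian group. -/
theorem mordell_weil (E : WeierstrassCurve ℚ) [E.IsElliptic] :
    AddGroup.FG E.toAffine.Point := by
  classical
  let L := E.twoTorsionPolynomial.toPoly.SplittingField
  have : NumberField L := { to_charZero := inferInstance, to_finiteDimensional := inferInstance }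
  obtain ⟨e, he⟩ := E.exists_hasTwoTorsionRoots_map (algebraMap ℚ L)
    (Polynomial.SplittingField.splits _)
  have hL : Module.Finite ℤ (E.map (algebraMap ℚ L)).toAffine.Point :=
    Module.Finite.iff_addGroup_fg.mpr he.fg_point
  let f : (E.map (algebraMap ℚ ℚ)).toAffine.Point →+ (E.map (algebraMap ℚ L)).toAffine.Point :=
    WeierstrassCurve.Affine.Point.baseChange (W' := E) ℚ L
  have hf : Function.Injective f :=
    WeierstrassCurve.Affine.Point.map_injective (W' := E) (Algebra.ofId ℚ L)
  have hfg : AddGroup.FG (E.map (algebraMap ℚ ℚ)).toAffine.Point :=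
    Module.Finite.iff_addGroup_fg.mp (Module.Finite.of_injective f.toIntLinearMap hf)
  exact hfg
end

section
/- Let E be an elliptic curve defined over the finite field 𝔽_q with q elements, let N_q = #E(𝔽_q) be the number of 𝔽_q-rational points of E, and set a = q + 1 − N_q. Then a² ≤ 4q. -/
open Polynomial

namespace WeierstrassCurve.Affine.Point

variable {K : Type*} [Field K] [DecidableEq K] {W : WeierstrassCurve K} [W.IsElliptic]

lemma exists_addSubMap_sym2x_self (A : W.toAffine.Point) :
    ∃ c : K, c ≠ 0 ∧ ∀ i, (W.addSubMap i).eval (A.sym2x A) = c * (A + A).sym2x 0 i := by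
  rcases A with _ | ⟨x, y, h⟩
  · refine ⟨1, one_ne_zero, fun i ↦ ?_⟩
    rw [← zero_def, add_zero, sym2x_zero_zero]
    fin_cases i <;> simp [addSubMap]
  · have hE := (equation_iff ..).mp h.1
    by_cases hy : y = W.toAffine.negY x y
    · have h1 : (W.addSubMap 1).eval ((some x y h).sym2x (some x y h)) = 0 := by
        rw [negY] at hy
        simp [addSubMap, b₂, b₄, b₆]
        linear_combination -4 * hE + (2 * y + W.a₁ * x + W.a₃) * hy
      have h2 : (W.addSubMap 2).eval ((some x y h).sym2x (some x y h)) = 0 := by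
        simp [addSubMap]
        ring
      refine ⟨(W.addSubMap 0).eval ((some x y h).sym2x (some x y h)), fun h0 ↦ ?_, fun i ↦ ?_⟩
      · refine addSubMap_ne_zero W (sym2x_ne_zero (some x y h) (some x y h)) ?_
        ext i
        fin_cases i
        exacts [h0, h1, h2]
      · rw [add_self_of_Y_eq hy, sym2x_zero_zero]
        fin_cases i
        · simp
        · simpa using h1
        · simpa using h2
    · have hy' : y - W.toAffine.negY x y ≠ 0 := sub_ne_zero.mpr hy
      refine ⟨(y - W.toAffine.negY x y) ^ 2, pow_ne_zero 2 hy', fun i ↦ ?_⟩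
      rw [add_self_of_Y_ne hy, sym2x_some_zero, sym2x_some_some, addX, slope_of_Y_ne rfl hy]
      have hD : y - W.toAffine.negY x y = 2 * y + W.a₁ * x + W.a₃ := by rw [negY]; ring
      generalize y - W.toAffine.negY x y = D at hy' hD ⊢
      fin_cases i
      · simp [addSubMap, b₂, b₄, b₆, b₈]
        field_simp
        rw [hD]
        linear_combination (W.a₁ ^ 2 + 4 * W.a₂ + 8 * x) * hE
      · simp [addSubMap, b₂, b₄, b₆, hD]
        linear_combination -4 * hE
      · simp [addSubMap]
        ring

lemma exists_addSubMap_sym2x (A B : W.toAffine.Point) :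
    ∃ c : K, c ≠ 0 ∧ ∀ i, (W.addSubMap i).eval (A.sym2x B) = c * (A + B).sym2x (A - B) i := by
  rcases A with _ | ⟨x₁, y₁, h₁⟩
  · refine ⟨1, one_ne_zero, fun i ↦ ?_⟩
    rw [← zero_def, zero_add, zero_sub, sym2x_neg_right]
    rcases B with _ | ⟨x, y, h⟩
    · rw [← zero_def, sym2x_zero_zero]
      fin_cases i <;> simp [addSubMap]
    · rw [sym2x_zero_some, sym2x_some_some]
      fin_cases i <;> simp [addSubMap] <;> ring
  rcases B with _ | ⟨x₂, y₂, h₂⟩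
  · refine ⟨1, one_ne_zero, fun i ↦ ?_⟩
    rw [← zero_def, add_zero, sub_zero, sym2x_some_zero, sym2x_some_some]
    fin_cases i <;> simp [addSubMap] <;> ring
  by_cases hx : x₁ = x₂
  · rcases X_eq_iff (h₁ := h₁) (h₂ := h₂).mp hx with h | h
    · rw [h, sub_self]
      exact exists_addSubMap_sym2x_self _
    · rw [h, sym2x_neg_left, neg_add_cancel, sub_eq_add_neg, sym2x_comm 0, ← neg_add,
        sym2x_neg_left]
      exact exists_addSubMap_sym2x_self _
  · have hE₁ := (equation_iff ..).mp h₁.1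
    have hE₂ := (equation_iff ..).mp h₂.1
    have hx' : x₁ - x₂ ≠ 0 := sub_ne_zero.mpr hx
    have hadd : W.toAffine.addX x₁ x₂ (W.toAffine.slope x₁ x₂ y₁ y₂) * (x₁ - x₂) ^ 2 =
        x₁ ^ 2 * x₂ + x₁ * x₂ ^ 2 + 2 * W.a₂ * x₁ * x₂ + W.a₄ * (x₁ + x₂) + 2 * W.a₆ +
          (y₁ * W.toAffine.negY x₂ y₂ + W.toAffine.negY x₁ y₁ * y₂) := by
      rw [addX, slope_of_X_ne hx, negY, negY]
      field_simp
      linear_combination hE₁ + hE₂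
    have hsub : W.toAffine.addX x₁ x₂ (W.toAffine.slope x₁ x₂ y₁ (W.toAffine.negY x₂ y₂)) *
        (x₁ - x₂) ^ 2 =
        x₁ ^ 2 * x₂ + x₁ * x₂ ^ 2 + 2 * W.a₂ * x₁ * x₂ + W.a₄ * (x₁ + x₂) + 2 * W.a₆ +
          (y₁ * y₂ + W.toAffine.negY x₁ y₁ * W.toAffine.negY x₂ y₂) := by
      rw [addX, slope_of_X_ne hx, negY, negY]
      field_simp
      linear_combination hE₁ + hE₂
    refine ⟨(x₁ - x₂) ^ 2, pow_ne_zero 2 hx', fun i ↦ ?_⟩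
    rw [sub_eq_add_neg (some ..), neg_some, add_of_X_ne hx, add_of_X_ne hx, sym2x_some_some,
      sym2x_some_some]
    generalize W.toAffine.addX x₁ x₂ (W.toAffine.slope x₁ x₂ y₁ y₂) = u at *
    generalize W.toAffine.addX x₁ x₂ (W.toAffine.slope x₁ x₂ y₁ (W.toAffine.negY x₂ y₂)) = v at *
    fin_cases i
    · refine mul_left_cancel₀ (pow_ne_zero 2 hx') ?_
      trans (u * (x₁ - x₂) ^ 2) * (v * (x₁ - x₂) ^ 2)
      · rw [hadd, hsub]
        simp [addSubMap, b₂, b₄, b₆, b₈, negY]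
        linear_combination
          ((W.a₁ * x₁ + W.a₃) ^ 2 + 4 * y₁ * (y₁ + W.a₁ * x₁ + W.a₃)) * hE₂ +
          ((W.a₁ * x₂ + W.a₃) ^ 2 + 4 * (x₂ ^ 3 + W.a₂ * x₂ ^ 2 + W.a₄ * x₂ + W.a₆)) * hE₁
      · simp
        ring
    · simp [addSubMap, b₂, b₄, b₆]
      rw [negY, negY] at *
      linear_combination -hadd - hsub
    · simp [addSubMap]
      ring

end WeierstrassCurve.Affine.Point

namespace Polynomial

variable {F : Type*} [Field F] {ι : Type*}

/-- A vector of polynomials without common factor whose maximal degree is `n`: it represents a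
point of projective space over `F(X)` of height `n`. -/
structure IsPrimitiveOfDegree (v : ι → F[X]) (n : ℕ) : Prop where
  span_eq_top : Ideal.span (Set.range v) = ⊤
  natDegree_le : ∀ i, (v i).natDegree ≤ n
  exists_coeff_ne_zero : ∃ i, (v i).coeff n ≠ 0

lemma span_range_eq_top_of_forall_isPrime {v : ι → F[X]}
    (h : ∀ M : Ideal F[X], M.IsPrime → (∀ i, v i ∈ M) → False) : Ideal.span (Set.range v) = ⊤ := by
  by_contra hv
  obtain ⟨M, hM, hvM⟩ := Ideal.exists_le_maximal _ hv
  exact h M hM.isPrime fun i ↦ hvM (Ideal.subset_span ⟨i, rfl⟩)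

lemma IsPrimitiveOfDegree.exists_notMem {v : ι → F[X]} {n : ℕ} (hv : IsPrimitiveOfDegree v n)
    {M : Ideal F[X]} (hM : M.IsPrime) : ∃ i, v i ∉ M := by
  by_contra! h
  refine hM.ne_top (top_le_iff.mp ?_)
  rw [← hv.span_eq_top, Ideal.span_le]
  rintro _ ⟨i, rfl⟩
  exact h i

lemma IsPrimitiveOfDegree.le_of_mul_eq_mul [Fintype ι] {v w : ι → F[X]} {n m : ℕ}
    (hv : IsPrimitiveOfDegree v n) (hw : IsPrimitiveOfDegree w m) {a b : F[X]} (hb : b ≠ 0)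
    (h : ∀ i, a * v i = b * w i) : n ≤ m := by
  obtain ⟨r, hr⟩ := Ideal.mem_span_range_iff_exists_fun.mp
    (hv.span_eq_top ▸ Submodule.mem_top : (1 : F[X]) ∈ Ideal.span (Set.range v))
  have ha : a = b * ∑ i, r i * w i := by
    rw [← mul_one a, ← hr, Finset.mul_sum, Finset.mul_sum]
    exact Finset.sum_congr rfl fun i _ ↦ by linear_combination r i * h i
  have hvw (i : ι) : w i = (∑ i, r i * w i) * v i :=
    mul_left_cancel₀ hb <| by rw [← h i, ← mul_assoc, ← ha]
  obtain ⟨j, hj⟩ := hw.exists_coeff_ne_zero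
  have ht : ∑ i, r i * w i ≠ 0 := fun h0 ↦ hj <| by rw [hvw j, h0, zero_mul, coeff_zero]
  obtain ⟨i, hi⟩ := hv.exists_coeff_ne_zero
  calc n ≤ (v i).natDegree := le_natDegree_of_ne_zero hi
    _ ≤ (w i).natDegree := natDegree_le_of_dvd ⟨_, (hvw i).trans (mul_comm _ _)⟩ <| by
        rw [hvw i]; exact mul_ne_zero ht fun h0 ↦ hi <| by rw [h0, coeff_zero]
    _ ≤ m := hw.natDegree_le i

lemma IsPrimitiveOfDegree.eq_of_map_eq [Fintype ι] {K : Type*} [Field K] [Algebra F[X] K]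
    [FaithfulSMul F[X] K] {v w : ι → F[X]} {n m : ℕ} (hv : IsPrimitiveOfDegree v n)
    (hw : IsPrimitiveOfDegree w m) {c : K} (hc : c ≠ 0)
    (h : ∀ i, algebraMap F[X] K (v i) = c * algebraMap F[X] K (w i)) : n = m := by
  have hinj := FaithfulSMul.algebraMap_injective F[X] K
  obtain ⟨j, hj⟩ := hw.exists_coeff_ne_zero
  have hwj : w j ≠ 0 := fun h0 ↦ hj <| by rw [h0, coeff_zero]
  have hvj : v j ≠ 0 := by
    rw [← (map_ne_zero_iff _ hinj), h j]
    exact mul_ne_zero hc <| (map_ne_zero_iff _ hinj).mpr hwj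
  have hvw (i : ι) : w j * v i = v j * w i := hinj <| by
    rw [map_mul, map_mul, h i, h j]; ring
  exact le_antisymm (hv.le_of_mul_eq_mul hw hvj hvw)
    (hw.le_of_mul_eq_mul hv hwj fun i ↦ (hvw i).symm)

/-- Every nonzero vector of polynomials is a multiple of a primitive one. -/
lemma exists_eq_mul_isPrimitiveOfDegree [Fintype ι] {v : ι → F[X]} (hv : v ≠ 0) :
    ∃ (g : F[X]) (w : ι → F[X]) (n : ℕ), g ≠ 0 ∧ IsPrimitiveOfDegree w n ∧
      (∀ i, v i = g * w i) ∧ ∀ h, (∀ i, h ∣ v i) → h ∣ g := by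
  obtain ⟨g, hg⟩ := IsPrincipalIdealRing.principal (Ideal.span (Set.range v))
  rw [Ideal.submodule_span_eq] at hg
  have hgv (i : ι) : g ∣ v i := by
    rw [← Ideal.mem_span_singleton, ← hg]
    exact Ideal.subset_span ⟨i, rfl⟩
  choose w hw using hgv
  have hg0 : g ≠ 0 := by
    rintro rfl
    exact hv <| _root_.funext fun i ↦ by simpa using hw i
  obtain ⟨r, hr⟩ := Ideal.mem_span_range_iff_exists_fun.mp
    (hg ▸ Ideal.mem_span_singleton_self g : g ∈ Ideal.span (Set.range v))
  have hspan : Ideal.span (Set.range w) = ⊤ := by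
    rw [Ideal.eq_top_iff_one, Ideal.mem_span_range_iff_exists_fun]
    refine ⟨r, mul_left_cancel₀ hg0 ?_⟩
    rw [Finset.mul_sum, mul_one]
    conv_rhs => rw [← hr]
    exact Finset.sum_congr rfl fun i _ ↦ by rw [hw i]; ring
  obtain ⟨k, hk⟩ := Function.ne_iff.mp hv
  obtain ⟨j, -, hj⟩ := Finset.exists_max_image Finset.univ (fun i ↦ (w i).degree)
    ⟨k, Finset.mem_univ k⟩
  have hj0 : w j ≠ 0 := by
    intro h0
    have := hj k (Finset.mem_univ k)
    rw [h0, degree_zero, le_bot_iff, degree_eq_bot] at this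
    exact hk <| by rw [hw k, this, mul_zero]; rfl
  refine ⟨g, w, (w j).natDegree, hg0, ⟨hspan, fun i ↦ ?_, j, ?_⟩, hw, fun h hh ↦ ?_⟩
  · exact natDegree_le_natDegree (hj i (Finset.mem_univ i))
  · exact leadingCoeff_ne_zero.mpr hj0
  · rw [← hr]
    exact Finset.dvd_sum fun i _ ↦ (hh i).mul_left _

lemma IsPrimitiveOfDegree.sym2 {v w : Fin 2 → F[X]} {n m : ℕ} (hv : IsPrimitiveOfDegree v n)
    (hw : IsPrimitiveOfDegree w m) :
    IsPrimitiveOfDegree ![v 0 * w 0, v 0 * w 1 + v 1 * w 0, v 1 * w 1] (n + m) := by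
  have hdeg (i j : Fin 2) : (v i * w j).natDegree ≤ n + m :=
    natDegree_mul_le_of_le (hv.natDegree_le i) (hw.natDegree_le j)
  have hcoeff (i j : Fin 2) : (v i * w j).coeff (n + m) = (v i).coeff n * (w j).coeff m :=
    coeff_mul_add_eq_of_natDegree_le (hv.natDegree_le i) (hw.natDegree_le j)
  refine ⟨span_range_eq_top_of_forall_isPrime fun M hM h ↦ ?_, fun i ↦ ?_, ?_⟩
  · have h0 : v 0 * w 0 ∈ M := h 0
    have h1 : v 0 * w 1 + v 1 * w 0 ∈ M := h 1
    have h2 : v 1 * w 1 ∈ M := h 2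
    obtain ⟨i, hi⟩ := hv.exists_notMem hM
    obtain ⟨j, hj⟩ := hw.exists_notMem hM
    have hvM : ∀ i j, v i * w j ∈ M → v i ∈ M ∨ w j ∈ M := fun i j ↦ hM.mem_or_mem
    have e1 : v 0 * w 1 ∈ M ↔ v 1 * w 0 ∈ M :=
      ⟨fun h ↦ (Ideal.add_mem_iff_right M h).mp h1, fun h ↦ (Ideal.add_mem_iff_left M h).mp h1⟩
    have e2 : ∀ i j, v i ∈ M → v i * w j ∈ M := fun i j h ↦ M.mul_mem_right _ h
    have e3 : ∀ i j, w j ∈ M → v i * w j ∈ M := fun i j h ↦ M.mul_mem_left _ h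
    have := hvM 0 0 h0
    have := hvM 1 1 h2
    fin_cases i <;> fin_cases j <;> grind
  · fin_cases i
    exacts [hdeg 0 0, natDegree_add_le_of_degree_le (hdeg 0 1) (hdeg 1 0), hdeg 1 1]
  · by_contra! h
    have h0 := h 0
    have h1 := h 1
    have h2 := h 2
    simp only [Matrix.cons_val, coeff_add, hcoeff] at h0 h1 h2
    obtain ⟨i, hi⟩ := hv.exists_coeff_ne_zero
    obtain ⟨j, hj⟩ := hw.exists_coeff_ne_zero
    fin_cases i <;> fin_cases j <;> grind

lemma IsPrimitiveOfDegree.addSubMap (W : WeierstrassCurve F) [W.IsElliptic] {v : Fin 3 → F[X]}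
    {n : ℕ} (hv : IsPrimitiveOfDegree v n) :
    IsPrimitiveOfDegree (fun i ↦ ((W.map C).addSubMap i).eval v) (2 * n) := by
  have hdeg (c : F) (i j : Fin 3) : (C c * (v i * v j)).natDegree ≤ 2 * n :=
    (natDegree_C_mul_le _ _).trans <| two_mul n ▸
      natDegree_mul_le_of_le (hv.natDegree_le i) (hv.natDegree_le j)
  have hsub {p q : F[X]} (hp : p.natDegree ≤ 2 * n) (hq : q.natDegree ≤ 2 * n) :
      (p - q).natDegree ≤ 2 * n := (natDegree_sub_le p q).trans (max_le hp hq)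
  have hcoeff (i j : Fin 3) : (v i * v j).coeff (2 * n) = (v i).coeff n * (v j).coeff n :=
    two_mul n ▸ coeff_mul_add_eq_of_natDegree_le (hv.natDegree_le i) (hv.natDegree_le j)
  have h0 : ((W.map C).addSubMap 0).eval v = C 1 * (v 0 * v 0) - C W.b₄ * (v 0 * v 2) -
      C W.b₆ * (v 1 * v 2) - C W.b₈ * (v 2 * v 2) := by
    simp [WeierstrassCurve.addSubMap]; ring
  have h1 : ((W.map C).addSubMap 1).eval v = C 2 * (v 1 * v 0) + C W.b₂ * (v 0 * v 2) +
      C W.b₄ * (v 1 * v 2) + C W.b₆ * (v 2 * v 2) := by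
    simp [WeierstrassCurve.addSubMap, C_ofNat]; ring
  have h2 : ((W.map C).addSubMap 2).eval v = C 1 * (v 1 * v 1) - C 4 * (v 0 * v 2) := by
    simp [WeierstrassCurve.addSubMap, C_ofNat]; ring
  refine ⟨span_range_eq_top_of_forall_isPrime fun M hM h ↦ ?_, fun i ↦ ?_, ?_⟩
  · obtain ⟨i, hi⟩ := hv.exists_notMem hM
    refine hi (hM.mem_of_pow_mem 4 ?_)
    rw [← WeierstrassCurve.addSubMapCoeff_condition (W.map C) v i]
    exact M.sum_mem fun j _ ↦ M.mul_mem_left _ (h j)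
  · fin_cases i
    · exact h0 ▸ hsub (hsub (hsub (hdeg ..) (hdeg ..)) (hdeg ..)) (hdeg ..)
    · exact h1 ▸ natDegree_add_le_of_degree_le (natDegree_add_le_of_degree_le
        (natDegree_add_le_of_degree_le (hdeg ..) (hdeg ..)) (hdeg ..)) (hdeg ..)
    · exact h2 ▸ hsub (hdeg ..) (hdeg ..)
  · have hne : (fun i ↦ (v i).coeff n) ≠ 0 := Function.ne_iff.mpr hv.exists_coeff_ne_zero
    obtain ⟨i, hi⟩ := Function.ne_iff.mp (WeierstrassCurve.addSubMap_ne_zero W hne)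
    refine ⟨i, fun h ↦ hi ?_⟩
    fin_cases i
    · have h := (congrArg (coeff · (2 * n)) h0).symm.trans h
      simp only [coeff_sub, coeff_C_mul, hcoeff] at h
      refine Eq.trans ?_ h
      simp [WeierstrassCurve.addSubMap]
      ring
    · have h := (congrArg (coeff · (2 * n)) h1).symm.trans h
      simp only [coeff_add, coeff_C_mul, hcoeff] at h
      refine Eq.trans ?_ h
      simp [WeierstrassCurve.addSubMap]
      ring
    · have h := (congrArg (coeff · (2 * n)) h2).symm.trans h
      simp only [coeff_sub, coeff_C_mul, hcoeff] at h
      refine Eq.trans ?_ h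
      simp [WeierstrassCurve.addSubMap]
      ring

lemma isPrimitiveOfDegree_X_pow (n : ℕ) :
    IsPrimitiveOfDegree ![(X ^ n : F[X]), 1] n where
  span_eq_top := Ideal.eq_top_of_isUnit_mem _ (Ideal.subset_span ⟨1, rfl⟩) isUnit_one
  natDegree_le i := by fin_cases i <;> simp
  exists_coeff_ne_zero := ⟨0, by simp⟩

end Polynomial

namespace WeierstrassCurve.Affine.Point

variable {F : Type*} [Field F] {E : WeierstrassCurve F} {K : Type*} [Field K] [Algebra F K]
  [Algebra F[X] K]

/-- The `x`-coordinate of the point `A` lies in `ℙ¹(F(X)) ⊆ ℙ¹(K)` and has degree `n` as a rational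
function. -/
def HasXDegree (A : (E.baseChange K).toAffine.Point) (n : ℕ) : Prop :=
  ∃ v : Fin 2 → F[X], IsPrimitiveOfDegree v n ∧
    ∃ c : K, c ≠ 0 ∧ ∀ i, algebraMap F[X] K (v i) = c * A.xRep i

lemma HasXDegree.neg {A : (E.baseChange K).toAffine.Point} {n : ℕ} (hn : A.HasXDegree n) :
    (-A).HasXDegree n := by
  simpa only [HasXDegree, xRep_neg] using hn

variable [FaithfulSMul F[X] K]

lemma HasXDegree.unique {A : (E.baseChange K).toAffine.Point} {n m : ℕ} (hn : A.HasXDegree n)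
    (hm : A.HasXDegree m) : n = m := by
  obtain ⟨v, hv, c, hc, hvA⟩ := hn
  obtain ⟨w, hw, d, hd, hwA⟩ := hm
  refine hv.eq_of_map_eq hw (div_ne_zero hc hd) fun i ↦ ?_
  rw [hvA, hwA]
  field_simp

lemma exists_hasXDegree {A : (E.baseChange K).toAffine.Point} {v : Fin 2 → F[X]} {c : K}
    (hc : c ≠ 0) (hv : ∀ i, algebraMap F[X] K (v i) = c * A.xRep i) :
    ∃ (g : F[X]) (n : ℕ), g ≠ 0 ∧ A.HasXDegree n ∧
      (∀ D, (∀ i, (v i).natDegree ≤ D) → n + g.natDegree ≤ D) ∧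
      ∀ h, (∀ i, h ∣ v i) → h ∣ g := by
  have hinj := FaithfulSMul.algebraMap_injective F[X] K
  have hv0 : v ≠ 0 := by
    rintro rfl
    refine xRep_ne_zero A <| funext fun i ↦ ?_
    simpa [hc, eq_comm] using hv i
  obtain ⟨g, w, n, hg, hw, hvw, hdvd⟩ := exists_eq_mul_isPrimitiveOfDegree hv0
  have hg' : algebraMap F[X] K g ≠ 0 := (map_ne_zero_iff _ hinj).mpr hg
  refine ⟨g, n, hg, ⟨w, hw, c / algebraMap F[X] K g, div_ne_zero hc hg', fun i ↦ ?_⟩,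
    fun D hD ↦ ?_, hdvd⟩
  · rw [div_mul_eq_mul_div, ← hv i, hvw, map_mul]
    field_simp
  · obtain ⟨i, hi⟩ := hw.exists_coeff_ne_zero
    have hwi : w i ≠ 0 := fun h0 ↦ hi <| by rw [h0, coeff_zero]
    have := hD i
    rw [hvw, natDegree_mul hg hwi] at this
    have := le_natDegree_of_ne_zero hi
    omega

variable [IsScalarTower F F[X] K] [DecidableEq K] [E.IsElliptic]

/-- The parallelogram law for the degree of the `x`-coordinate. -/
lemma HasXDegree.add {A B : (E.baseChange K).toAffine.Point} {n m d : ℕ} (hA : A.HasXDegree n)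
    (hB : B.HasXDegree m) (hAB : (A - B).HasXDegree d) :
    ∃ k, (A + B).HasXDegree k ∧ k + d = 2 * n + 2 * m := by
  have hinj := FaithfulSMul.algebraMap_injective F[X] K
  obtain ⟨v, hv, a, ha, hvA⟩ := hA
  obtain ⟨w, hw, b, hb, hwB⟩ := hB
  obtain ⟨u, hu, c, hc, huAB⟩ := hAB
  have hz := (hv.sym2 hw).addSubMap E
  set z : Fin 3 → F[X] := fun i ↦ ((E.map C).addSubMap i).eval
    ![v 0 * w 0, v 0 * w 1 + v 1 * w 0, v 1 * w 1] with hzdef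
  have : (E.baseChange K).IsElliptic :=
    inferInstanceAs (E.map (algebraMap F K)).IsElliptic
  obtain ⟨k, hk, hkAB⟩ := exists_addSubMap_sym2x A B
  have hC (r : F) : algebraMap F[X] K (C r) = algebraMap F K r :=
    (IsScalarTower.algebraMap_apply F F[X] K r).symm
  have h₂ : algebraMap F[X] K 2 = 2 := map_ofNat _ 2
  have h₄ : algebraMap F[X] K 4 = 4 := map_ofNat _ 4
  have hb₂ : (E.baseChange K).b₂ = algebraMap F K E.b₂ := E.map_b₂ _
  have hb₄ : (E.baseChange K).b₄ = algebraMap F K E.b₄ := E.map_b₄ _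
  have hb₆ : (E.baseChange K).b₆ = algebraMap F K E.b₆ := E.map_b₆ _
  have hb₈ : (E.baseChange K).b₈ = algebraMap F K E.b₈ := E.map_b₈ _
  have hzAB (i : Fin 3) : algebraMap F[X] K (z i) =
      (a * b) ^ 2 * k * (A + B).sym2x (A - B) i := by
    rw [mul_assoc, ← hkAB]
    fin_cases i <;>
      simp [hzdef, addSubMap, sym2x, hvA, hwB, hC, h₂, h₄, hb₂, hb₄, hb₆, hb₈] <;> ring
  have hk' : (a * b) ^ 2 * k ≠ 0 := by positivity
  generalize (a * b) ^ 2 * k = l at hzAB hk'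
  have hz0 := hzAB 0
  have hz1 := hzAB 1
  have hz2 := hzAB 2
  simp only [sym2x, Matrix.cons_val] at hz0 hz1 hz2
  have hu0 := huAB 0
  have hu1 := huAB 1
  obtain ⟨t, r, hr, ht⟩ : ∃ (t : Fin 2 → F[X]) (r : K), r ≠ 0 ∧
      ∀ i, algebraMap F[X] K (t i) = r * (A + B).xRep i := by
    by_cases h : (A - B).xRep 1 = 0
    · have h0 : (A - B).xRep 0 ≠ 0 := fun h0 ↦ xRep_ne_zero (A - B) <| funext fun i ↦ by
        fin_cases i
        exacts [h0, h]
      refine ⟨![z 0, z 1], l * (A - B).xRep 0, mul_ne_zero hk' h0, fun i ↦ ?_⟩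
      fin_cases i
      · simp [hz0]; ring
      · simp [hz1, h]; ring
    · refine ⟨![z 1 * u 1 - z 2 * u 0, z 2 * u 1], l * c * (A - B).xRep 1 ^ 2, by positivity,
        fun i ↦ ?_⟩
      fin_cases i
      · simp [hz1, hz2, hu0, hu1]; ring
      · simp [hz2, hu1]; ring
  obtain ⟨-, p, -, hp, -⟩ := exists_hasXDegree hr ht
  refine ⟨p, hp, ?_⟩
  obtain ⟨s, hs, e, he, hsAB⟩ := hp
  have := (hs.sym2 hu).eq_of_map_eq hz (K := K) (c := e * c / l) (by positivity) fun i ↦ by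
    rw [hzAB]
    field_simp
    fin_cases i <;> simp [sym2x, hsAB, huAB] <;> ring
  omega

end WeierstrassCurve.Affine.Point

/-- A quadratic function on an abelian group with values in `ℕ`, given as a relation `H`, that takes
the value `1`, satisfies the Cauchy–Schwarz inequality. -/
lemma sq_le_four_mul_of_parallelogram {G : Type*} [AddCommGroup G] {H : G → ℕ → Prop}
    (hH : ∀ {A B : G} {n m d : ℕ}, H A n → H B m → H (A - B) d →
      ∃ k, H (A + B) k ∧ k + d = 2 * n + 2 * m)
    {P Q : G} {q r s : ℕ} (hP : H P 1) (hP' : H (-P) 1) (hQ : H Q q) (hr : H (Q + P) r)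
    (hs : H (Q - P) s) (hrs : r + s = 2 * q + 2) :
    ((r : ℤ) - 1 - q) ^ 2 ≤ 4 * q := by
  wlog h : r ≤ 1 + q generalizing P r s
  · have := this hP' (by rwa [neg_neg]) (sub_eq_add_neg Q P ▸ hs) (sub_neg_eq_add Q P ▸ hr)
      (by omega) (by omega)
    rwa [show (s : ℤ) - 1 - q = -(r - 1 - q) by omega, neg_sq] at this
  have hn (n : ℕ) : ∃ k l : ℕ, H (Q + n • P) k ∧ H (Q + (n + 1) • P) l ∧
      (k : ℤ) = n ^ 2 + (r - 1 - q) * n + q ∧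
      (l : ℤ) = (n + 1) ^ 2 + (r - 1 - q) * (n + 1) + q := by
    induction n with
    | zero => exact ⟨q, r, by simpa using hQ, by simpa using hr, by simp, by simp; ring⟩
    | succ n ih =>
      obtain ⟨k, l, hk, hl, ek, el⟩ := ih
      obtain ⟨m, hm, em⟩ := hH hl hP (d := k)
        (by rwa [succ_nsmul, ← add_assoc, add_sub_cancel_right])
      refine ⟨l, m, hl, by rwa [succ_nsmul P (n + 1), ← add_assoc], by simpa using el, ?_⟩
      zify at em
      push_cast
      linear_combination em - ek + 2 * el
  obtain ⟨n, hn' | hn'⟩ : ∃ n : ℕ, (r : ℤ) - 1 - q = -(2 * n) ∨ (r : ℤ) - 1 - q = -(2 * n + 1) :=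
    ⟨(1 + q - r) / 2, by omega⟩
  · obtain ⟨k, -, -, -, ek, -⟩ := hn n
    rw [hn'] at ek ⊢
    nlinarith
  · obtain ⟨k, l, hk, hl, ek, el⟩ := hn n
    obtain ⟨m, -, em⟩ := hH hl hk (d := 1) (by rwa [succ_nsmul, ← add_assoc, add_sub_cancel_left])
    rw [hn'] at ek el ⊢
    have : (1 : ℤ) ≤ k := by
      have : l = k := by zify; linear_combination el - ek
      omega
    nlinarith

namespace WeierstrassCurve.Affine.CoordinateRing

variable {F : Type*} [Field F] {E : Affine F}

lemma aeval_mk_C_X (r : F[X]) : aeval (mk E (C X)) r = mk E (C r) := by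
  rw [show mk E (C X) = algebraMap F[X] E.CoordinateRing X from rfl, aeval_algebraMap_apply,
    aeval_X_left_apply]
  rfl

lemma mk_X_sq : mk E X ^ 2 = mk E (C (X ^ 3 + C E.a₂ * X ^ 2 + C E.a₄ * X + C E.a₆)) -
    mk E (C (C E.a₁ * X + C E.a₃)) * mk E X := by
  rw [← map_pow, ← map_mul, ← map_sub]
  exact AdjoinRoot.mk_eq_mk.mpr ⟨1, by rw [Affine.polynomial]; ring⟩

lemma mk_C_add_mk_C_mul_inj {p s p₁ s₁ : F[X]}
    (h : mk E (C p) + mk E (C s) * mk E X = mk E (C p₁) + mk E (C s₁) * mk E X) :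
    p = p₁ ∧ s = s₁ := by
  have := smul_basis_eq_zero (W' := E) (p := p - p₁) (q := s - s₁) <| by
    simp only [smul, map_sub]
    linear_combination h
  simpa only [sub_eq_zero] using this

lemma exists_algebraMap_equation (E : Affine F) (L : Type*) [Field L] [IsAlgClosed L] [Algebra F L]
    (a : F) : ∃ b : L,
      b ^ 2 + algebraMap F L E.a₁ * algebraMap F L a * b + algebraMap F L E.a₃ * b =
      algebraMap F L a ^ 3 + algebraMap F L E.a₂ * algebraMap F L a ^ 2 +
        algebraMap F L E.a₄ * algebraMap F L a + algebraMap F L E.a₆ := by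
  obtain ⟨b, hb⟩ := IsAlgClosed.exists_root (C (1 : L) * X ^ 2 +
    C (algebraMap F L (E.a₁ * a + E.a₃)) * X +
      C (-algebraMap F L (a ^ 3 + E.a₂ * a ^ 2 + E.a₄ * a + E.a₆)))
    (by rw [degree_quadratic one_ne_zero]; decide)
  refine ⟨b, ?_⟩
  simp [IsRoot] at hb
  linear_combination hb

variable (E) in
/-- The number of points on `E` with given `x`-coordinate. -/
noncomputable def fiberCard (a : F) : ℕ := {b | E.Equation a b}.ncard

lemma fiber_eq {a b : F} (hb : E.Equation a b) : {b | E.Equation a b} = {b, E.negY a b} := by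
  ext c
  refine ⟨fun h ↦ Y_eq_of_X_eq h hb rfl, ?_⟩
  rintro (rfl | rfl)
  exacts [hb, (equation_neg ..).mpr hb]

variable (E) in
lemma fiberCard_le (a : F) : fiberCard E a ≤ 2 := by
  by_cases ha : ∃ b, E.Equation a b
  · obtain ⟨b, hb⟩ := ha
    rw [fiberCard, fiber_eq hb]
    exact (Set.ncard_insert_le ..).trans (by rw [Set.ncard_singleton])
  · push Not at ha
    simp [fiberCard, ha]

variable [Fintype F] {p s : F[X]}

section

variable (h : mk E X ^ Fintype.card F = mk E (C p) + mk E (C s) * mk E X)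
include h

lemma pow_card_eq_of_equation {L : Type*} [CommRing L] [Algebra F L] {a b : L}
    (hab : b ^ 2 + algebraMap F L E.a₁ * a * b + algebraMap F L E.a₃ * b =
      a ^ 3 + algebraMap F L E.a₂ * a ^ 2 + algebraMap F L E.a₄ * a + algebraMap F L E.a₆) :
    b ^ Fintype.card F = aeval a p + aeval a s * b := by
  have h0 : E.polynomial.eval₂ (aeval a : F[X] →ₐ[F] L).toRingHom b = 0 := by
    simp [Affine.polynomial, eval₂_pow]
    linear_combination hab
  simpa using congr(AdjoinRoot.lift (aeval a : F[X] →ₐ[F] L).toRingHom b h0 $h)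

lemma frobenius_trace :
    2 * p - s * (C E.a₁ * X + C E.a₃) = -(C E.a₁ * X ^ Fintype.card F + C E.a₃) := by
  have hC (r : F) : algebraMap F E.CoordinateRing r = mk E (C (C r)) := rfl
  have h2 := pow_card_eq_of_equation h (a := mk E (C X))
    (b := - mk E X - mk E (C (C E.a₁ * X + C E.a₃))) (by
      have := mk_X_sq (E := E)
      simp only [hC]
      simp only [map_add, map_mul, map_pow] at this ⊢
      linear_combination this)
  have hFr : (- mk E X - mk E (C (C E.a₁ * X + C E.a₃))) ^ Fintype.card F =
      - mk E X ^ Fintype.card F - mk E (C (C E.a₁ * X ^ Fintype.card F + C E.a₃)) := by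
    simp only [← FiniteField.frobeniusAlgHom_apply, map_sub, map_neg, map_add, map_mul, ← hC,
      AlgHom.commutes]
    simp
  rw [hFr, aeval_mk_C_X, aeval_mk_C_X, h] at h2
  refine (mk_C_add_mk_C_mul_inj (E := E) (s := 0) (s₁ := 0) ?_).1
  simp only [map_add, map_mul, map_neg, map_sub, map_ofNat, map_zero] at h2 ⊢
  linear_combination -h2

lemma frobenius_norm : p ^ 2 - p * s * (C E.a₁ * X + C E.a₃) -
    s ^ 2 * (X ^ 3 + C E.a₂ * X ^ 2 + C E.a₄ * X + C E.a₆) =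
      -((X ^ Fintype.card F) ^ 3 + C E.a₂ * (X ^ Fintype.card F) ^ 2 +
        C E.a₄ * X ^ Fintype.card F + C E.a₆) := by
  have hC (r : F) : algebraMap F E.CoordinateRing r = mk E (C (C r)) := rfl
  have h1 := mk_X_sq (E := E)
  have h2 := congr(FiniteField.frobeniusAlgHom F E.CoordinateRing $h1)
  simp only [map_sub, map_mul, map_add, map_pow, ← hC, AlgHom.commutes] at h2
  simp only [FiniteField.frobeniusAlgHom_apply, h, hC] at h2
  have h3 := mk_C_add_mk_C_mul_inj (E := E)
    (p := p ^ 2 + s ^ 2 * (X ^ 3 + C E.a₂ * X ^ 2 + C E.a₄ * X + C E.a₆))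
    (s := 2 * p * s - s ^ 2 * (C E.a₁ * X + C E.a₃))
    (p₁ := (X ^ Fintype.card F) ^ 3 + C E.a₂ * (X ^ Fintype.card F) ^ 2 +
        C E.a₄ * X ^ Fintype.card F + C E.a₆ - (C E.a₁ * X ^ Fintype.card F + C E.a₃) * p)
    (s₁ := -(C E.a₁ * X ^ Fintype.card F + C E.a₃) * s) <| by
      simp only [map_sub, map_mul, map_add, map_pow, map_neg, map_ofNat] at h1 h2 ⊢
      linear_combination h2 - mk E (C s) ^ 2 * h1
  linear_combination -h3.1 + p * frobenius_trace h

lemma natDegree_frobenius :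
    2 * p.natDegree ≤ 3 * Fintype.card F ∧ 2 * s.natDegree + 3 ≤ 3 * Fintype.card F := by
  have hq : 0 < Fintype.card F := Fintype.card_pos
  have h1 := degree_norm_smul_basis (W' := E) p s
  have h2 : (-((X ^ Fintype.card F) ^ 3 + C E.a₂ * (X ^ Fintype.card F) ^ 2 +
      C E.a₄ * X ^ Fintype.card F + C E.a₆)).degree ≤ ((3 * Fintype.card F : ℕ) : WithBot ℕ) := by
    refine degree_le_of_natDegree_le ?_
    compute_degree
    omega
  rw [norm_smul_basis, frobenius_norm h] at h1
  obtain ⟨h3, h4⟩ := max_le_iff.mp (h1 ▸ h2)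
  constructor
  · rcases eq_or_ne p 0 with rfl | hp
    · simp
    · rw [degree_eq_natDegree hp] at h3
      rw [two_nsmul] at h3
      norm_cast at h3
      omega
  · rcases eq_or_ne s 0 with rfl | hs
    · simp; omega
    · rw [degree_eq_natDegree hs] at h4
      rw [two_nsmul] at h4
      norm_cast at h4
      omega

end

variable (E) in
/-- The numerator of `t ^ 2 + a₁ * t - (a₂ + x ^ q + x)` over the denominator `(x ^ q - x) ^ 2`,
where `t = (u + w * y) / (x ^ q - x)` and `2 * u - w * (a₁ * x + a₃) = -a₁ * (x ^ q - x)`. -/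
noncomputable def xNumerator (u w : F[X]) : F[X] :=
  -(u ^ 2 - u * w * (C E.a₁ * X + C E.a₃) -
    w ^ 2 * (X ^ 3 + C E.a₂ * X ^ 2 + C E.a₄ * X + C E.a₆)) -
  (C E.a₂ + X ^ Fintype.card F + X) * (X ^ Fintype.card F - X) ^ 2

lemma X_sub_C_dvd_X_pow_card_sub_X (a : F) : X - C a ∣ (X ^ Fintype.card F - X : F[X]) := by
  simp [dvd_iff_isRoot, FiniteField.pow_card]

lemma sq_dvd_xNumerator {u w : F[X]} {a : F} (hu : u.eval a = 0) (hw : w.eval a = 0) :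
    (X - C a) ^ 2 ∣ xNumerator E u w := by
  obtain ⟨u, rfl⟩ := dvd_iff_isRoot.mpr hu
  obtain ⟨w, rfl⟩ := dvd_iff_isRoot.mpr hw
  refine dvd_sub ?_ (Dvd.dvd.mul_left (pow_dvd_pow_of_dvd (X_sub_C_dvd_X_pow_card_sub_X a) 2) _)
  exact ⟨-(u ^ 2 - u * w * (C E.a₁ * X + C E.a₃) -
    w ^ 2 * (X ^ 3 + C E.a₂ * X ^ 2 + C E.a₄ * X + C E.a₆)), by ring⟩

lemma dvd_xNumerator {u w : F[X]} {a b : F} (hab : E.Equation a b)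
    (h : u.eval a + w.eval a * b = 0) : X - C a ∣ xNumerator E u w := by
  rw [dvd_iff_isRoot, IsRoot, xNumerator]
  rw [equation_iff] at hab
  simp [FiniteField.pow_card]
  linear_combination (-(u.eval a) + w.eval a * (b + E.a₁ * a + E.a₃)) * h - w.eval a ^ 2 * hab

section

variable (h : mk E X ^ Fintype.card F = mk E (C p) + mk E (C s) * mk E X)
include h

lemma natDegree_xNumerator_add :
    (xNumerator E p (s - 1)).natDegree ≤ 2 * Fintype.card F + 1 := by
  have h1 : xNumerator E p (s - 1) = X ^ (2 * Fintype.card F + 1) + X ^ (Fintype.card F + 2) +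
      2 * C E.a₂ * X ^ (Fintype.card F + 1) + C E.a₄ * X ^ Fintype.card F + C E.a₄ * X +
      2 * C E.a₆ - p * (C E.a₁ * X + C E.a₃) -
      2 * s * (X ^ 3 + C E.a₂ * X ^ 2 + C E.a₄ * X + C E.a₆) := by
    rw [xNumerator]
    linear_combination -frobenius_norm h
  have h2 := natDegree_frobenius h
  have h3 : 0 < Fintype.card F := Fintype.card_pos
  rw [h1]
  compute_degree
  omega

lemma natDegree_xNumerator_sub :
    (xNumerator E (p + (C E.a₁ * X + C E.a₃)) (s + 1)).natDegree ≤ 2 * Fintype.card F + 1 := by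
  have h1 : xNumerator E (p + (C E.a₁ * X + C E.a₃)) (s + 1) =
      X ^ (2 * Fintype.card F + 1) + X ^ (Fintype.card F + 2) +
      2 * C E.a₂ * X ^ (Fintype.card F + 1) + C E.a₄ * X ^ Fintype.card F + C E.a₄ * X +
      2 * C E.a₆ - p * (C E.a₁ * X + C E.a₃) + s * (C E.a₁ * X + C E.a₃) ^ 2 +
      2 * s * (X ^ 3 + C E.a₂ * X ^ 2 + C E.a₄ * X + C E.a₆) := by
    rw [xNumerator]
    linear_combination -frobenius_norm h
  have h2 := natDegree_frobenius h
  have h3 : 0 < Fintype.card F := Fintype.card_pos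
  rw [h1]
  compute_degree
  omega

end

lemma prod_X_sub_C_eq_X_pow_card_sub_X : ∏ a : F, (X - C a) = X ^ Fintype.card F - X := by
  have h1 := FiniteField.roots_X_pow_card_sub_X F
  have hq := Fintype.one_lt_card (α := F)
  have h2 : (X ^ Fintype.card F - X : F[X]).Monic :=
    monic_X_pow_sub (by rw [degree_X]; exact_mod_cast hq)
  rw [← prod_multiset_X_sub_C_of_monic_of_roots_card_eq h2, h1]
  · rfl
  · rw [h1, FiniteField.X_pow_card_sub_X_natDegree_eq F hq]
    rfl

lemma exists_algebraMap_eq_of_pow_card_eq {L : Type*} [Field L] [Algebra F L] {b : L}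
    (hb : b ^ Fintype.card F = b) : ∃ a : F, algebraMap F L a = b := by
  have := congr(aeval b $(prod_X_sub_C_eq_X_pow_card_sub_X (F := F)))
  simp only [map_prod, map_sub, aeval_X, aeval_C, map_pow, hb, sub_self,
    Finset.prod_eq_zero_iff, sub_eq_zero] at this
  obtain ⟨a, -, ha⟩ := this
  exact ⟨a, ha.symm⟩

variable (E) in
lemma sum_fiberCard [E.IsElliptic] : 1 + ∑ a, fiberCard E a = Nat.card E.Point := by
  rw [Nat.card_congr E.pointEquiv, WithZero, Finite.card_option, add_comm,
    Nat.card_congr (Equiv.subtypeProdEquivSigmaSubtype E.Equation), Nat.card_sigma]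
  rfl

lemma prod_X_sub_C_pow_dvd {n : F → ℕ} {f : F[X]} (h : ∀ a, (X - C a) ^ n a ∣ f) :
    ∏ a, (X - C a) ^ n a ∣ f :=
  Finset.prod_dvd_of_coprime
    (fun _ _ _ _ hab ↦ (pairwise_coprime_X_sub_C Function.injective_id hab).pow) fun a _ ↦ h a

lemma natDegree_prod_X_sub_C_pow (n : F → ℕ) :
    (∏ a, (X - C a) ^ n a).natDegree = ∑ a, n a := by
  rw [natDegree_prod_of_monic _ _ fun a _ ↦ (monic_X_sub_C a).pow _]
  simp

lemma prod_X_sub_C_pow_dvd_sq {n : F → ℕ} (hn : ∀ a, n a ≤ 2) :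
    ∏ a, (X - C a) ^ n a ∣ (X ^ Fintype.card F - X) ^ 2 :=
  prod_X_sub_C_pow_dvd fun a ↦ (pow_dvd_pow _ (hn a)).trans
    (pow_dvd_pow_of_dvd (X_sub_C_dvd_X_pow_card_sub_X a) 2)

section

variable (h : mk E X ^ Fintype.card F = mk E (C p) + mk E (C s) * mk E X)
include h

lemma eq_eval_add {a b : F} (hb : E.Equation a b) : b = p.eval a + s.eval a * b := by
  simpa [FiniteField.pow_card, coe_aeval_eq_eval] using
    pow_card_eq_of_equation h (L := F) ((equation_iff ..).mp hb)

lemma eval_of_fiber_eq_empty {a : F} (ha : ∀ b, ¬E.Equation a b) :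
    p.eval a + (E.a₁ * a + E.a₃) = 0 ∧ s.eval a = - 1 := by
  let L := AlgebraicClosure F
  obtain ⟨b, hb⟩ := exists_algebraMap_equation E L a
  have h1 := pow_card_eq_of_equation h hb
  have hbF (c : F) : algebraMap F L c ≠ b := by
    rintro rfl
    refine ha c ((equation_iff ..).mpr <| FaithfulSMul.algebraMap_injective F L ?_)
    simpa using hb
  have h2 := congr(FiniteField.frobeniusAlgHom F L $hb)
  simp only [map_add, map_mul, map_pow, AlgHom.commutes] at h2
  rw [FiniteField.frobeniusAlgHom_apply] at h2
  have h3 : (b ^ Fintype.card F - b) * (b ^ Fintype.card F + b +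
      algebraMap F L E.a₁ * algebraMap F L a + algebraMap F L E.a₃) = 0 := by linear_combination h2 - hb
  rcases mul_eq_zero.mp h3 with h4 | h4
  · obtain ⟨c, hc⟩ := exists_algebraMap_eq_of_pow_card_eq (sub_eq_zero.mp h4)
    exact (hbF c hc).elim
  rw [h1, aeval_algebraMap_apply, aeval_algebraMap_apply] at h4
  simp only [coe_aeval_eq_eval] at h4
  have h5 : s.eval a + 1 = 0 := by
    by_contra h5
    refine hbF (-(p.eval a + E.a₁ * a + E.a₃) / (s.eval a + 1)) ?_
    have h6 := (map_ne_zero (algebraMap F L)).mpr h5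
    rw [map_div₀, div_eq_iff h6]
    simp only [map_add, map_mul, map_neg, map_one]
    linear_combination -h4
  refine ⟨FaithfulSMul.algebraMap_injective F L ?_, by linear_combination h5⟩
  have h6 := congr(algebraMap F L $h5)
  simp only [map_add, map_mul, map_one, map_zero] at h6 ⊢
  linear_combination h4 - b * h6

lemma pow_dvd_xNumerator_add (a : F) :
    (X - C a) ^ fiberCard E a ∣ xNumerator E p (s - 1) := by
  by_cases ha : ∃ b, E.Equation a b
  · obtain ⟨b, hb⟩ := ha
    have h1 := eq_eval_add h hb
    rw [fiberCard, fiber_eq hb]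
    by_cases hb' : b = E.negY a b
    · rw [← hb', Set.pair_eq_singleton, Set.ncard_singleton, pow_one]
      refine dvd_xNumerator hb ?_
      simp
      linear_combination -h1
    · have h2 := eq_eval_add h ((equation_neg ..).mpr hb)
      have h3 : s.eval a - 1 = 0 :=
        (mul_eq_zero.mp (by linear_combination h2 - h1)).resolve_right (sub_ne_zero.mpr hb')
      rw [Set.ncard_pair hb']
      refine sq_dvd_xNumerator ?_ (by simpa using h3)
      linear_combination -h1 - b * h3
  · push Not at ha
    simp [fiberCard, ha]

lemma pow_dvd_xNumerator_sub (a : F) : (X - C a) ^ (2 - fiberCard E a) ∣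
      xNumerator E (p + (C E.a₁ * X + C E.a₃)) (s + 1) := by
  by_cases ha : ∃ b, E.Equation a b
  · obtain ⟨b, hb⟩ := ha
    have h1 := eq_eval_add h hb
    rw [fiberCard, fiber_eq hb]
    by_cases hb' : b = E.negY a b
    · rw [← hb', Set.pair_eq_singleton, Set.ncard_singleton, pow_one]
      refine dvd_xNumerator hb ?_
      rw [negY] at hb'
      simp
      linear_combination -h1 + hb'
    · rw [Set.ncard_pair hb']
      exact one_dvd _
  · push Not at ha
    obtain ⟨h1, h2⟩ := eval_of_fiber_eq_empty h ha
    simp only [fiberCard, ha, Set.ofPred_false, Set.ncard_empty]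
    exact sq_dvd_xNumerator (by simpa using h1) (by simp [h2])

end

variable {K : Type*} [Field K] [Algebra F K] [Algebra F[X] K] [FaithfulSMul F[X] K]
  [IsScalarTower F F[X] K]

lemma exists_hasXDegree_add_natDegree_le {x y : K} (hx : x = algebraMap F[X] K X) {u w g : F[X]}
    (hy : y ^ 2 + (algebraMap F K E.a₁ * x + algebraMap F K E.a₃) * y = x ^ 3 +
      algebraMap F K E.a₂ * x ^ 2 + algebraMap F K E.a₄ * x + algebraMap F K E.a₆)
    (huw : 2 * u - w * (C E.a₁ * X + C E.a₃) = - C E.a₁ * (X ^ Fintype.card F - X))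
    (hdeg : (xNumerator E u w).natDegree ≤ 2 * Fintype.card F + 1)
    (hg : g ∣ xNumerator E u w) (hg' : g ∣ (X ^ Fintype.card F - X) ^ 2)
    {A : (E.baseChange K).toAffine.Point} {t : K}
    (ht : t * (x ^ Fintype.card F - x) = algebraMap F[X] K u + algebraMap F[X] K w * y)
    (hA : A.xRep = ![(E.baseChange K).toAffine.addX (x ^ Fintype.card F) x t, 1]) :
    ∃ n, A.HasXDegree n ∧ n + g.natDegree ≤ 2 * Fintype.card F + 1 := by
  have hinj := FaithfulSMul.algebraMap_injective F[X] K
  have hq := Fintype.one_lt_card (α := F)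
  have hC (r : F) : algebraMap F[X] K (C r) = algebraMap F K r :=
    (IsScalarTower.algebraMap_apply F F[X] K r).symm
  have hden : algebraMap F[X] K ((X ^ Fintype.card F - X) ^ 2) ≠ 0 :=
    (map_ne_zero_iff _ hinj).mpr <| pow_ne_zero _ <| FiniteField.X_pow_card_sub_X_ne_zero F hq
  obtain ⟨G, n, hG, hn, hle, hdvd⟩ := Point.exists_hasXDegree (A := A)
    (v := ![xNumerator E u w, (X ^ Fintype.card F - X) ^ 2]) hden fun i ↦ by
      have h2 := congr(algebraMap F[X] K $huw)
      have h2' : algebraMap F[X] K 2 = 2 := map_ofNat _ 2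
      fin_cases i
      · simp [hA, addX, xNumerator, hC, ← hx, h2'] at h2 ⊢
        linear_combination -ht * (t * (x ^ Fintype.card F - x) +
          (algebraMap F[X] K u + algebraMap F[X] K w * y) +
          algebraMap F K E.a₁ * (x ^ Fintype.card F - x)) -
          (algebraMap F[X] K u + algebraMap F[X] K w * y) * h2 - algebraMap F[X] K w ^ 2 * hy
      · simp [hA]
  refine ⟨n, hn, (Nat.add_le_add_left ?_ n).trans (hle _ fun i ↦ ?_)⟩
  · refine natDegree_le_of_dvd (hdvd g fun i ↦ ?_) hG
    fin_cases i
    exacts [hg, hg']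
  · fin_cases i
    · exact hdeg
    · simp only [Fin.mk_one, Matrix.cons_val_one, Matrix.cons_val_zero, natDegree_pow,
        FiniteField.X_pow_card_sub_X_natDegree_eq F hq]
      omega

lemma exists_mk_X_pow_card (E : Affine F) :
    ∃ p s : F[X], mk E X ^ Fintype.card F = mk E (C p) + mk E (C s) * mk E X := by
  obtain ⟨p, s, h⟩ := exists_smul_basis_eq (mk E X ^ Fintype.card F)
  exact ⟨p, s, by rw [← h, smul, smul, mul_one]⟩

end WeierstrassCurve.Affine.CoordinateRing

open WeierstrassCurve Affine CoordinateRing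

/-- **Hasse bound**: for an elliptic curve `E` over the finite field `𝔽_q` with `q` elements,
if `N_q = #E(𝔽_q)` and `a = q + 1 - N_q`, then `a² ≤ 4q`. -/
theorem hasse_bound (F : Type) [Field F] [Fintype F] (E : WeierstrassCurve F) [E.IsElliptic] :
    ((Fintype.card F : ℤ) + 1 - (Nat.card E.toAffine.Point : ℤ)) ^ 2
      ≤ 4 * (Fintype.card F : ℤ) := by
  classical
  let K := E.toAffine.FunctionField
  have hinj := FaithfulSMul.algebraMap_injective F[X] K
  have hq := Fintype.one_lt_card (α := F)
  have hC (r : F) : algebraMap F[X] K (C r) = algebraMap F K r :=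
    (IsScalarTower.algebraMap_apply F F[X] K r).symm
  have hR (r : F[X]) : algebraMap E.toAffine.CoordinateRing K (mk E.toAffine (C r)) =
    algebraMap F[X] K r := (IsScalarTower.algebraMap_apply F[X] E.toAffine.CoordinateRing K r).symm
  have : (E.baseChange K).IsElliptic := inferInstanceAs (E.map (algebraMap F K)).IsElliptic
  obtain ⟨p, s, h⟩ := exists_mk_X_pow_card E.toAffine
  obtain ⟨x, hx⟩ : ∃ x, x = algebraMap F[X] K X := ⟨_, rfl⟩
  obtain ⟨y, hy⟩ : ∃ y, y = algebraMap E.toAffine.CoordinateRing K (mk E.toAffine X) := ⟨_, rfl⟩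
  have hyq : y ^ Fintype.card F = algebraMap F[X] K p + algebraMap F[X] K s * y := by
    rw [hy, ← map_pow, h, map_add, map_mul, hR, hR]
  have hxy : y ^ 2 + (algebraMap F K E.a₁ * x + algebraMap F K E.a₃) * y = x ^ 3 +
      algebraMap F K E.a₂ * x ^ 2 + algebraMap F K E.a₄ * x + algebraMap F K E.a₆ := by
    have := congr(algebraMap E.toAffine.CoordinateRing K $(mk_X_sq (E := E.toAffine)))
    simp only [map_sub, map_mul, map_pow, hR] at this
    simp only [map_add, map_mul, map_pow, hC, ← hx, ← hy] at this
    linear_combination this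
  have hxyq := congr(FiniteField.frobeniusAlgHom F K $hxy)
  simp only [map_add, map_mul, map_pow, AlgHom.commutes] at hxyq
  simp only [FiniteField.frobeniusAlgHom_apply] at hxyq
  have hP : (E.baseChange K).toAffine.Nonsingular x y :=
    equation_iff_nonsingular.mp <| (equation_iff ..).mpr <| by
      change y ^ 2 + algebraMap F K E.a₁ * x * y + algebraMap F K E.a₃ * y = x ^ 3 +
        algebraMap F K E.a₂ * x ^ 2 + algebraMap F K E.a₄ * x + algebraMap F K E.a₆
      linear_combination hxy
  have hQ : (E.baseChange K).toAffine.Nonsingular (x ^ Fintype.card F) (y ^ Fintype.card F) :=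
    equation_iff_nonsingular.mp <| (equation_iff ..).mpr <| by
      change _ + algebraMap F K E.a₁ * _ * _ + algebraMap F K E.a₃ * _ = _ +
        algebraMap F K E.a₂ * _ + algebraMap F K E.a₄ * _ + algebraMap F K E.a₆
      linear_combination hxyq
  have hne : x ^ Fintype.card F ≠ x := by
    rw [hx, ← map_pow]
    exact fun h ↦ FiniteField.X_pow_card_sub_X_ne_zero F hq (sub_eq_zero.mpr (hinj h))
  let P : (E.baseChange K).toAffine.Point := .some x y hP
  let Q : (E.baseChange K).toAffine.Point := .some _ _ hQ
  have hP1 : P.HasXDegree 1 := by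
    refine ⟨![X ^ 1, 1], isPrimitiveOfDegree_X_pow 1, 1, one_ne_zero, fun i ↦ ?_⟩
    fin_cases i <;> simp [P, hx]
  have hQq : Q.HasXDegree (Fintype.card F) := by
    refine ⟨![X ^ Fintype.card F, 1], isPrimitiveOfDegree_X_pow _, 1, one_ne_zero, fun i ↦ ?_⟩
    fin_cases i <;> simp [Q, hx]
  obtain ⟨m, hm, hmle⟩ := exists_hasXDegree_add_natDegree_le (A := Q + P) hx hxy
    (by linear_combination frobenius_trace h)
    (natDegree_xNumerator_add h) (prod_X_sub_C_pow_dvd (pow_dvd_xNumerator_add h))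
    (prod_X_sub_C_pow_dvd_sq (fiberCard_le _))
    (t := (E.baseChange K).toAffine.slope (x ^ Fintype.card F) x (y ^ Fintype.card F) y)
    (by
      rw [slope_of_X_ne hne, div_mul_cancel₀ _ (sub_ne_zero.mpr hne), hyq, map_sub, map_one]
      ring)
    (by rw [Point.add_of_X_ne hne, Point.xRep_some])
  obtain ⟨n, hn, hnle⟩ := exists_hasXDegree_add_natDegree_le (A := Q - P) hx hxy
    (by linear_combination frobenius_trace h)
    (natDegree_xNumerator_sub h) (prod_X_sub_C_pow_dvd (pow_dvd_xNumerator_sub h))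
    (prod_X_sub_C_pow_dvd_sq fun _ ↦ Nat.sub_le ..)
    (t := (E.baseChange K).toAffine.slope (x ^ Fintype.card F) x (y ^ Fintype.card F)
      ((E.baseChange K).toAffine.negY x y))
    (by
      rw [slope_of_X_ne hne, div_mul_cancel₀ _ (sub_ne_zero.mpr hne), hyq, negY]
      change _ - (-y - algebraMap F K E.a₁ * x - algebraMap F K E.a₃) = _
      simp only [map_add, map_mul, map_one, hC, ← hx]
      ring)
    (by rw [sub_eq_add_neg, Point.neg_some, Point.add_of_X_ne hne, Point.xRep_some])
  obtain ⟨k, hk, hkn⟩ := hQq.add hP1 hn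
  obtain rfl := hk.unique hm
  rw [natDegree_prod_X_sub_C_pow] at hmle hnle
  have hcard : 1 + ∑ a, fiberCard E a = Nat.card E.toAffine.Point := sum_fiberCard E
  have hsum : ∑ a, fiberCard E a + ∑ a, (2 - fiberCard E a) =
      2 * Fintype.card F := by
    rw [← Finset.sum_add_distrib, Finset.sum_congr rfl fun a _ ↦
      Nat.add_sub_of_le (fiberCard_le E a)]
    simp [mul_comm]
  have := sq_le_four_mul_of_parallelogram Point.HasXDegree.add hP1 hP1.neg hQq hm hn (by omega)
  convert this using 2
  omega
end
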